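/- arXiv:2010.04204 — 6 statements merged into one kernel-verified Lean document; each statement's English description precedes it below -/
import Mathlib

section
/- Let (Σ,w) be a weighted signed graph whose underlying graph is the cycle C_n on n vertices. Then det L(Σ,w) = 2·w(C_n)·(1 − σ(C_n)), where w(C_n) is the product of the weights of all edges of the cycle and σ(C_n) is the product of the signs of all edges of the cycle. -/
/-!
The cycle has as many edges as vertices, so after orienting the edge `{k, k + 1}` from `k` to
`k + 1` the signed incidence matrix `B` is square, and `L = B * diagonal w * Bᵀ`
(`signedLap_cycle_eq`). Hence `det L = (det B)² * w(C_n)`. The matrix `B` is the identity minus a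
weighted cyclic shift, and expanding along its first row leaves two triangular minors, giving
`det B = 1 - σ(C_n)` (`det_cycleInc`). Since `σ(C_n) = ±1`, one has
`(1 - σ(C_n))² = 2 * (1 - σ(C_n))`.
-/

/-- The weighted signed Laplacian matrix `L(Σ,w) = D(Σ,w) - A(Σ,w)` of a weighted signed
graph: the underlying graph is `G`, the signature is `σ` and the weights are `w`
(both given as functions on unordered pairs of vertices). -/
def signedLap {V : Type*} [Fintype V] [DecidableEq V] (G : SimpleGraph V)
    [DecidableRel G.Adj] (σ w : Sym2 V → ℝ) : Matrix V V ℝ :=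
  Matrix.of fun i j =>
    if i = j then ∑ k, if G.Adj i k then w s(i, k) else 0
    else if G.Adj i j then -(σ s(i, j) * w s(i, j)) else 0

/-- The signed incidence matrix of a cycle: rows are vertices, and column `k` is the edge
`{k, k + 1}` of sign `s k`, with entry `1` at `k` and `-s k` at `k + 1` (cyclically). -/
def cycleInc {m : ℕ} (s : Fin (m + 3) → ℝ) : Matrix (Fin (m + 3)) (Fin (m + 3)) ℝ :=
  Matrix.of fun i k => (if k = i then 1 else 0) - (if k = i - 1 then s k else 0)

lemma fin_one_ne_zero (m : ℕ) : (1 : Fin (m + 3)) ≠ 0 := by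
  simp

lemma fin_two_ne_zero (m : ℕ) : (1 + 1 : Fin (m + 3)) ≠ 0 := by
  intro h
  have := congrArg Fin.val h
  simp [Fin.val_add] at this
  rw [Nat.mod_eq_of_lt (by omega)] at this
  omega

lemma fin_sub_one_ne_add_one {m : ℕ} (i : Fin (m + 3)) : i - 1 ≠ i + 1 := by
  intro h
  apply fin_two_ne_zero m
  have h2 : i + 1 - (i - 1) = 0 := by rw [h, sub_self]
  rw [← h2]; abel

lemma cycle_adj_iff {m : ℕ} (i j : Fin (m + 3)) :
    (SimpleGraph.cycleGraph (m + 3)).Adj i j ↔ j = i + 1 ∨ j = i - 1 := by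
  rw [SimpleGraph.cycleGraph_adj, sub_eq_iff_eq_add, sub_eq_iff_eq_add, eq_sub_iff_add_eq,
    add_comm 1 j, add_comm 1 i, or_comm, eq_comm (a := i)]

lemma sum_cycleInc_mul {m : ℕ} (s t : Fin (m + 3) → ℝ) (i : Fin (m + 3)) :
    ∑ k, cycleInc s i k * t k = t i - s (i - 1) * t (i - 1) := by
  simp [cycleInc, sub_mul, Finset.sum_sub_distrib]

/-- Every edge of the cycle is `{k, k + 1}` for exactly one `k`; uniqueness uses that there are
at least three vertices. -/
lemma prod_cycle_edges {m : ℕ} (f : Sym2 (Fin (m + 3)) → ℝ) :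
    ∏ e ∈ (SimpleGraph.cycleGraph (m + 3)).edgeFinset, f e = ∏ k : Fin (m + 3), f s(k, k + 1) := by
  symm
  refine Finset.prod_bij (fun k _ => s(k, k + 1)) ?_ ?_ ?_ (fun _ _ => rfl)
  · intro k _
    rw [SimpleGraph.mem_edgeFinset, SimpleGraph.mem_edgeSet, cycle_adj_iff]
    exact Or.inl rfl
  · intro a _ b _ h
    rcases Sym2.eq_iff.1 h with h | h
    · exact h.1
    · exact absurd ((sub_eq_of_eq_add h.2.symm).trans h.1) (fin_sub_one_ne_add_one b)
  · intro e he
    induction e with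
    | _ i j =>
      rw [SimpleGraph.mem_edgeFinset, SimpleGraph.mem_edgeSet, cycle_adj_iff] at he
      rcases he with rfl | rfl
      · exact ⟨i, Finset.mem_univ _, rfl⟩
      · exact ⟨i - 1, Finset.mem_univ _, by rw [sub_add_cancel, Sym2.eq_swap]⟩

lemma signedLap_cycle_eq {m : ℕ} (σ w : Sym2 (Fin (m + 3)) → ℝ)
    (hσ : ∀ k : Fin (m + 3), σ s(k, k + 1) * σ s(k, k + 1) = 1) :
    signedLap (SimpleGraph.cycleGraph (m + 3)) σ w =
      cycleInc (fun k => σ s(k, k + 1)) * Matrix.diagonal (fun k => w s(k, k + 1)) *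
        (cycleInc (fun k => σ s(k, k + 1))).transpose := by
  have h1 := fin_one_ne_zero m
  ext i j
  rw [Matrix.mul_assoc, Matrix.mul_apply, sum_cycleInc_mul]
  simp only [Matrix.diagonal_mul, Matrix.transpose_apply, signedLap, Matrix.of_apply,
    cycle_adj_iff, sub_add_cancel]
  have hs := hσ (i - 1)
  rw [sub_add_cancel] at hs
  have hne : i - 1 ≠ i := by simp [sub_eq_self]
  by_cases hij : i = j
  · subst hij
    have hsum : ∑ k, (if k = i + 1 ∨ k = i - 1 then w s(i, k) else 0) =
        w s(i, i + 1) + w s(i - 1, i) := by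
      rw [← Finset.sum_filter, Finset.filter_or, Finset.filter_eq', Finset.filter_eq']
      simp only [Finset.mem_univ, if_true]
      rw [← Finset.insert_eq, Finset.sum_pair (fin_sub_one_ne_add_one i).symm,
        Sym2.eq_swap (a := i) (b := i - 1)]
    rw [if_pos rfl, hsum]
    simp only [cycleInc, Matrix.of_apply, if_true, if_neg hne, if_neg hne.symm, sub_add_cancel]
    linear_combination (-w s(i - 1, i)) * hs
  · rw [if_neg hij]
    have hji : i - 1 ≠ j - 1 := fun h => hij (sub_left_injective h)
    simp only [cycleInc, Matrix.of_apply, if_neg hij, if_neg hji, sub_add_cancel]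
    by_cases hp : j = i + 1
    · subst hp
      simp [fin_sub_one_ne_add_one i]
      ring
    · have hp' : i ≠ j - 1 := fun h => hp (by rw [h, sub_add_cancel])
      by_cases hq : j = i - 1
      · subst hq
        simp [hp', Sym2.eq_swap (a := i) (b := i - 1)]
      · simp [hp, hp', hq, Ne.symm hq]

lemma det_cycleInc {m : ℕ} (s : Fin (m + 3) → ℝ) : (cycleInc s).det = 1 - ∏ k, s k := by
  have hB : ∀ i k : Fin (m + 3), cycleInc s i k =
      (if k.val = i.val then 1 else 0) -
        (if k.val + 1 = i.val ∨ (k.val = m + 2 ∧ i.val = 0) then s k else 0) := by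
    intro i k
    have h : k = i - 1 ↔ k.val + 1 = i.val ∨ (k.val = m + 2 ∧ i.val = 0) := by
      rw [eq_sub_iff_add_eq, Fin.ext_iff, Fin.val_add_one]
      have := i.isLt
      have := k.isLt
      split_ifs with hk
      · subst hk
        rw [Fin.val_last]
        omega
      · have : k.val ≠ m + 2 := fun h => hk (Fin.ext h)
        omega
    simp only [cycleInc, Matrix.of_apply, h]
    simp only [Fin.ext_iff]
  rw [Matrix.det_succ_row_zero, Fin.sum_univ_succ, Fin.sum_univ_castSucc]
  have hmid : ∀ k : Fin (m + 1), cycleInc s 0 k.castSucc.succ = 0 := by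
    intro k
    rw [hB]
    have := k.isLt
    simp
    omega
  have h0 : cycleInc s 0 0 = 1 := by rw [hB]; simp
  have hl : cycleInc s 0 (Fin.last (m + 1)).succ = - s (Fin.last (m + 2)) := by
    rw [hB]; simp
  have hd0 : ((cycleInc s).submatrix Fin.succ (Fin.succAbove 0)).det = 1 := by
    rw [Matrix.det_of_isLowerTriangular]
    · apply Finset.prod_eq_one
      intro k _
      rw [Matrix.submatrix_apply, hB]
      simp
    · intro i j hij
      have hij : i < j := hij
      rw [Matrix.submatrix_apply, Fin.zero_succAbove, hB, Fin.val_succ, Fin.val_succ]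
      rw [Fin.lt_def] at hij
      rw [if_neg (by omega), if_neg (by omega)]; simp
  have hdl : ((cycleInc s).submatrix Fin.succ (Fin.succAbove (Fin.last (m + 1)).succ)).det =
      ∏ k : Fin (m + 2), -s k.castSucc := by
    rw [Fin.succ_last, Matrix.det_of_isUpperTriangular]
    · refine Finset.prod_congr rfl fun k _ => ?_
      rw [Matrix.submatrix_apply, hB]
      simp
    · intro i j hij
      have hij : j < i := hij
      rw [Matrix.submatrix_apply, Fin.succAbove_last, hB, Fin.val_succ, Fin.val_castSucc]
      rw [Fin.lt_def] at hij
      rw [if_neg (by omega), if_neg (by omega)]; simp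
  simp only [hmid, h0, hl, hd0, hdl]
  rw [Fin.prod_univ_castSucc (n := m + 2), Finset.prod_neg]
  have hpow : ((-1 : ℝ) ^ (m + 2)) * (-1) ^ (m + 2) = 1 := by
    rw [← mul_pow]; simp
  simp
  linear_combination (-(s (Fin.last (m + 2)) * ∏ k : Fin (m + 2), s k.castSucc)) * hpow

/-- If the underlying graph of a weighted signed graph `(Σ,w)` is the
cycle `C_n` on `n` vertices, then `det L(Σ,w) = 2 ⬝ w(C_n) ⬝ (1 - σ(C_n))`, where
`w(C_n)` is the product of the weights and `σ(C_n)` the product of the signs of all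
edges of the cycle. -/
theorem det_signedLap_cycle
    (n : ℕ) (hn : 3 ≤ n) (σ w : Sym2 (Fin n) → ℝ)
    (hσ : ∀ e ∈ (SimpleGraph.cycleGraph n).edgeSet, σ e = 1 ∨ σ e = -1)
    (hw : ∀ e ∈ (SimpleGraph.cycleGraph n).edgeSet, 0 < w e) :
    (signedLap (SimpleGraph.cycleGraph n) σ w).det =
      2 * (∏ e ∈ (SimpleGraph.cycleGraph n).edgeFinset, w e) *
        (1 - ∏ e ∈ (SimpleGraph.cycleGraph n).edgeFinset, σ e) := by
  obtain ⟨m, rfl⟩ : ∃ m, n = m + 3 := ⟨n - 3, by omega⟩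
  have hs : ∀ k : Fin (m + 3), σ s(k, k + 1) * σ s(k, k + 1) = 1 := by
    intro k
    have hk : s(k, k + 1) ∈ (SimpleGraph.cycleGraph (m + 3)).edgeSet := by
      rw [SimpleGraph.mem_edgeSet, cycle_adj_iff]
      exact Or.inl rfl
    rcases hσ _ hk with h | h <;> rw [h] <;> norm_num
  have hprod : (∏ k : Fin (m + 3), σ s(k, k + 1)) * ∏ k : Fin (m + 3), σ s(k, k + 1) = 1 := by
    rw [← Finset.prod_mul_distrib]
    exact Finset.prod_eq_one fun k _ => hs k
  rw [prod_cycle_edges, prod_cycle_edges, signedLap_cycle_eq σ w hs, Matrix.det_mul,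
    Matrix.det_mul, Matrix.det_transpose, Matrix.det_diagonal, det_cycleInc]
  linear_combination (∏ k : Fin (m + 3), w s(k, k + 1)) * hprod
end

section
/- Let (Σ,w) be a weighted signed graph whose underlying graph is a connected unicyclic graph of order n (a connected graph with exactly one cycle C). Then det L(Σ,w) = 2·w(Σ)·(1 − σ(C)), where w(Σ) is the product of the weights of all edges of Σ and σ(C) is the product of the signs of the edges of the unique cycle C. -/
/-- The incidence matrix of the signed graph with edges `s(u, p u)`: the row of `u` is that of the
edge `s(u, p u)`, with entry `1` at `u` and `-σ` at `p u`. -/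
def parentInc {V : Type*} [DecidableEq V] (p : V → V) (σ : Sym2 V → ℝ) : Matrix V V ℝ :=
  Matrix.of fun u i => (if i = u then 1 else 0) - if i = p u then σ s(u, p u) else 0

/-- Away from `r`, the map `p` decreases `d`, so the edges `s(u, p u)` with `u ≠ r` form a tree
rooted at `r`, and `s` is the switching function which makes all of its edges positive. -/
lemma det_parentInc {V : Type*} [Fintype V] [DecidableEq V] (p : V → V) (σ : Sym2 V → ℝ)
    (r : V) (d : V → ℕ) (s : V → ℝ) (hd : ∀ u, u ≠ r → d (p u) < d u) (hr : s r = 1)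
    (hs : ∀ u, u ≠ r → s u = σ s(u, p u) * s (p u)) :
    (parentInc p σ).det = 1 - σ s(r, p r) * s (p r) := by
  set N := parentInc p σ with hN
  have hNs : N.mulVec s = Pi.single r (1 - σ s(r, p r) * s (p r)) := by
    ext u
    have h1 : N.mulVec s u = s u - σ s(u, p u) * s (p u) := by
      simp [hN, parentInc, Matrix.mulVec, dotProduct, sub_mul, Finset.sum_sub_distrib]
    rw [h1]
    by_cases hu : u = r
    · subst hu; simp [hr]
    · rw [Pi.single_eq_of_ne hu, hs u hu, sub_self]
  have hadj : N.adjugate r r = 1 := by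
    rw [Matrix.adjugate_apply]
    set M := N.updateRow r (Pi.single r 1) with hM
    have hdiag : ∀ i, M i i = 1 := by
      intro i
      by_cases hi : i = r
      · subst hi; simp [hM]
      · have : i ≠ p i := fun h => by have := hd i hi; rw [← h] at this; exact lt_irrefl _ this
        simp [hM, Matrix.updateRow_ne hi, hN, parentInc, this]
    have hoff : ∀ i j, i ≠ j → d i ≤ d j → M i j = 0 := by
      intro i j hij hdij
      by_cases hi : i = r
      · subst hi; simp [hM, Ne.symm hij]
      · have : j ≠ p i := by rintro rfl; exact absurd (hd i hi) (not_lt.2 hdij)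
        simp [hM, Matrix.updateRow_ne hi, hN, parentInc, this, Ne.symm hij]
    have htri : M.BlockTriangular (fun i => OrderDual.toDual (d i)) := by
      intro i j hij
      have hij' : d i < d j := hij
      exact hoff i j (by rintro rfl; exact lt_irrefl _ hij') hij'.le
    rw [htri.det]
    refine Finset.prod_eq_one fun a _ => ?_
    have : M.toSquareBlock (fun i => OrderDual.toDual (d i)) a = 1 := by
      ext ⟨i, hi⟩ ⟨j, hj⟩
      by_cases hij : i = j
      · subst hij; simp [Matrix.toSquareBlock_def, hdiag]
      · have hdd : d i = d j := OrderDual.toDual_inj.1 (hi.trans hj.symm)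
        simp [Matrix.toSquareBlock_def, hij, hoff i j hij hdd.le]
    rw [this, Matrix.det_one]
  have key : (N.adjugate * N).mulVec s r = N.det := by
    rw [Matrix.adjugate_mul, Matrix.smul_mulVec, Matrix.one_mulVec]; simp [hr]
  rw [← Matrix.mulVec_mulVec, hNs] at key
  simpa [hadj] using key.symm

lemma signedLap_eq_mul {V : Type*} [Fintype V] [DecidableEq V] (G : SimpleGraph V)
    [DecidableRel G.Adj] (σ w : Sym2 V → ℝ) (hσ : ∀ e ∈ G.edgeSet, σ e = 1 ∨ σ e = -1)
    (p : V → V) (hp : ∀ u, G.Adj u (p u))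
    (hinj : Function.Injective fun u => s(u, p u))
    (hsurj : ∀ e ∈ G.edgeSet, ∃ u, s(u, p u) = e) :
    signedLap G σ w = (parentInc p σ).transpose *
      Matrix.diagonal (fun u => w s(u, p u)) * parentInc p σ := by
  have himg : Finset.univ.image (fun u => s(u, p u)) = G.edgeFinset := by
    ext e
    simp only [Finset.mem_image, Finset.mem_univ, true_and, SimpleGraph.mem_edgeFinset]
    exact ⟨by rintro ⟨u, rfl⟩; exact hp u, hsurj e⟩
  have hsum : ∀ g : Sym2 V → ℝ, ∑ u, g s(u, p u) = ∑ e ∈ G.edgeFinset, g e := by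
    intro g
    rw [← himg, Finset.sum_image hinj.injOn]
  ext i j
  -- The contribution of an edge to the `(i, j)` entry does not depend on its orientation.
  have hK : ∀ u, parentInc p σ u i * w s(u, p u) * parentInc p σ u j =
      if i = j then (if i ∈ s(u, p u) then w s(u, p u) else 0)
      else if s(u, p u) = s(i, j) then -(σ s(u, p u) * w s(u, p u)) else 0 := by
    intro u
    have hne : u ≠ p u := (hp u).ne
    have h2 : σ s(u, p u) * σ s(u, p u) = 1 := by
      rcases hσ s(u, p u) (hp u) with h | h <;> simp [h]
    simp only [parentInc, Matrix.of_apply, Sym2.mem_iff, Sym2.eq_iff]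
    generalize σ s(u, p u) = a at *
    generalize w s(u, p u) = b at *
    generalize p u = q at *
    split_ifs <;> grind
  have hL : ((parentInc p σ).transpose *
      Matrix.diagonal (fun u => w s(u, p u)) * parentInc p σ) i j =
      ∑ u, parentInc p σ u i * w s(u, p u) * parentInc p σ u j := by
    rw [Matrix.mul_apply]
    simp only [Matrix.mul_diagonal, Matrix.transpose_apply]
  rw [hL, Finset.sum_congr rfl fun u _ => hK u,
    hsum fun e => if i = j then (if i ∈ e then w e else 0)
      else if e = s(i, j) then -(σ e * w e) else 0]
  by_cases hij : i = j
  · subst hij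
    simp only [signedLap, Matrix.of_apply, if_true]
    rw [← Finset.sum_filter, ← Finset.sum_filter]
    refine Finset.sum_bij (fun k _ => s(i, k)) ?_ ?_ ?_ ?_
    · intro k hk; simpa using hk
    · intro a _ b _ h; exact Sym2.congr_right.1 h
    · intro e he
      obtain ⟨he, k, rfl⟩ := Finset.mem_filter.1 he
      exact ⟨k, by simpa using he, rfl⟩
    · intros; rfl
  · simp only [signedLap, Matrix.of_apply, hij, if_false]
    rw [Finset.sum_ite_eq']
    simp

/-- Rooting a tree `T` at `r` and adding one further edge `s(r, x)`: every edge of the resulting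
graph is `s(u, p u)` for exactly one vertex `u`. -/
lemma exists_parent {V : Type*} [Fintype V] [DecidableEq V] (T : SimpleGraph V)
    (hT : T.IsTree) (r x : V) (hx : ¬ T.Adj r x) :
    ∃ p : V → V, p r = x ∧ (∀ u, u ≠ r → T.Adj u (p u)) ∧
      (∀ u, u ≠ r → T.dist u r = T.dist (p u) r + 1) ∧
      Function.Injective (fun u => s(u, p u)) ∧
      ∀ e ∈ T.edgeSet, ∃ u, u ≠ r ∧ s(u, p u) = e := by
  classical
  have hex : ∀ u, u ≠ r → ∃ q, T.Adj u q ∧ T.dist u r = T.dist q r + 1 := by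
    intro u hu
    obtain ⟨W, hW⟩ := hT.connected.exists_walk_length_eq_dist u r
    cases W with
    | nil => exact absurd rfl hu
    | @cons _ q _ h W =>
      refine ⟨q, h, ?_⟩
      have h1 := SimpleGraph.dist_le W
      have h2 := hT.connected.dist_triangle (u := u) (v := q) (w := r)
      rw [SimpleGraph.dist_eq_one_iff_adj.2 h] at h2
      rw [SimpleGraph.Walk.length_cons] at hW
      omega
  choose! p hp1 hp2 using hex
  have hup : ∀ u, u ≠ r → Function.update p r x u = p u := fun u hu =>
    Function.update_of_ne hu _ _
  have hinj : Function.Injective (fun u => s(u, Function.update p r x u)) := by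
    intro a b hab
    by_contra hne
    simp only at hab
    by_cases ha : a = r
    · subst ha
      rw [Function.update_self, hup b (Ne.symm hne)] at hab
      have := hp1 b (Ne.symm hne)
      rw [← SimpleGraph.mem_edgeSet, ← hab] at this
      exact hx this
    by_cases hb : b = r
    · subst hb
      rw [Function.update_self, hup a hne] at hab
      have := hp1 a hne
      rw [← SimpleGraph.mem_edgeSet, hab] at this
      exact hx this
    rw [hup a ha, hup b hb] at hab
    have h1 := hp2 a ha
    have h2 := hp2 b hb
    rcases Sym2.eq_iff.1 hab with ⟨h, _⟩ | ⟨h, h'⟩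
    · exact hne h
    · rw [h'] at h1
      rw [← h] at h2
      omega
  refine ⟨Function.update p r x, by simp, fun u hu => by rw [hup u hu]; exact hp1 u hu,
    fun u hu => by rw [hup u hu]; exact hp2 u hu, hinj, ?_⟩
  -- A tree has one edge fewer than vertices, so injectivity yields surjectivity.
  have himg : (Finset.univ.erase r).image (fun u => s(u, Function.update p r x u))
      = T.edgeFinset := by
    refine Finset.eq_of_subset_of_card_le ?_ ?_
    · intro e he
      obtain ⟨u, hu, rfl⟩ := Finset.mem_image.1 he
      have hu := Finset.ne_of_mem_erase hu
      rw [SimpleGraph.mem_edgeFinset, hup u hu]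
      exact hp1 u hu
    · rw [Finset.card_image_of_injective _ hinj, Finset.card_erase_of_mem (Finset.mem_univ _),
        Finset.card_univ]
      have := hT.card_edgeFinset
      omega
  intro e he
  rw [← SimpleGraph.mem_edgeFinset, ← himg] at he
  obtain ⟨u, hu, h⟩ := Finset.mem_image.1 he
  exact ⟨u, Finset.ne_of_mem_erase hu, h⟩

/-- If the underlying graph of a weighted signed graph `(Σ,w)` is a
connected unicyclic graph (a connected graph with exactly one cycle `C`, here given by
the cycle `c` at the vertex `v`, unique in the sense that any cycle in `G` has the same
edge set), then `det L(Σ,w) = 2 ⬝ w(Σ) ⬝ (1 - σ(C))`, where `w(Σ)` is the product of the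
weights of all edges of `Σ` and `σ(C)` is the product of the signs of the edges of `C`. -/
theorem det_signedLap_unicyclic
    {V : Type*} [Fintype V] [DecidableEq V] (G : SimpleGraph V) [DecidableRel G.Adj]
    (σ w : Sym2 V → ℝ)
    (hσ : ∀ e ∈ G.edgeSet, σ e = 1 ∨ σ e = -1)
    (hw : ∀ e ∈ G.edgeSet, 0 < w e)
    (hconn : G.Connected)
    (v : V) (c : G.Walk v v) (hc : c.IsCycle)
    (huniq : ∀ (u : V) (c' : G.Walk u u), c'.IsCycle →
      c'.edges.toFinset = c.edges.toFinset) :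
    (signedLap G σ w).det =
      2 * (∏ e ∈ G.edgeFinset, w e) * (1 - (c.edges.map σ).prod) := by
  classical
  cases c with
  | nil => exact absurd rfl hc.ne_nil
  | @cons _ x _ hvx q =>
  obtain ⟨hq, hvq⟩ := SimpleGraph.Walk.cons_isCycle_iff q hvx |>.1 hc
  set T := G.deleteEdges {s(v, x)} with hTdef
  have hTG : T ≤ G := SimpleGraph.deleteEdges_le _
  have hTconn : T.Connected := by
    refine hconn.connected_delete_edge_of_not_isBridge fun hb => ?_
    exact hb.notMem_edges_of_isCycle hc (by simp)
  have hTacyc : T.IsAcyclic := by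
    intro u c' hc'
    have h := huniq u (c'.mapLe hTG) (hc'.mapLe hTG)
    have hmem : s(v, x) ∈ (c'.mapLe hTG).edges := by
      rw [← List.mem_toFinset, h]; simp
    rw [SimpleGraph.Walk.edges_mapLe_eq_edges] at hmem
    have := c'.edges_subset_edgeSet hmem
    simp [hTdef] at this
  have hTvx : ¬ T.Adj v x := by simp [hTdef]
  obtain ⟨p, hpr, hpadj, hpd, hinj, hsurjT⟩ :=
    exists_parent T ⟨hTconn, hTacyc⟩ v x hTvx
  have hp : ∀ u, G.Adj u (p u) := by
    intro u
    by_cases hu : u = v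
    · subst hu; rwa [hpr]
    · exact hTG (hpadj u hu)
  have hsurj : ∀ e ∈ G.edgeSet, ∃ u, s(u, p u) = e := by
    intro e he
    by_cases hev : e = s(v, x)
    · exact ⟨v, by rw [hpr, hev]⟩
    · obtain ⟨u, _, h⟩ := hsurjT e (by simp [hTdef, SimpleGraph.edgeSet_deleteEdges, he, hev])
      exact ⟨u, h⟩
  -- The product of the signs along the tree path from `u` to the root `v`.
  let s : V → ℝ := fun u => ∏ k ∈ Finset.range (T.dist u v), σ s(p^[k] u, p (p^[k] u))
  have hs0 : s v = 1 := by simp [s]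
  have hs : ∀ u, u ≠ v → s u = σ s(u, p u) * s (p u) := by
    intro u hu
    simp only [s]
    rw [hpd u hu, Finset.prod_range_succ', mul_comm]
    rfl
  have hσ2 : ∀ e ∈ G.edgeSet, σ e * σ e = 1 := by
    intro e he
    rcases hσ e he with h | h <;> simp [h]
  have hsadj : ∀ a b, T.Adj a b → s a = σ s(a, b) * s b := by
    intro a b hab
    obtain ⟨u, hu, h⟩ := hsurjT s(a, b) hab
    have h1 := hs u hu
    have h2 := hσ2 s(u, p u) (hp u)
    rcases Sym2.eq_iff.1 h with ⟨rfl, rfl⟩ | ⟨rfl, rfl⟩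
    · exact h1
    · rw [Sym2.eq_swap, h1, ← mul_assoc, h2, one_mul]
  have hwalk : ∀ (a b : V) (W : G.Walk a b), (∀ e ∈ W.edges, e ≠ s(v, x)) →
      s a = (W.edges.map σ).prod * s b := by
    intro a b W
    induction W with
    | nil => simp
    | @cons a b' b h W ih =>
      intro hW
      have hT : T.Adj a b' := by
        have := hW s(a, b') (by simp)
        simpa [hTdef, SimpleGraph.deleteEdges_adj, h] using this
      rw [hsadj _ _ hT, ih fun e he => hW e (by simp [he])]
      simp [mul_assoc]
  have hsx : s x = (q.edges.map σ).prod := by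
    rw [hwalk x v q (fun e he h => hvq (h ▸ he)), hs0, mul_one]
  have hdet := det_parentInc p σ v (fun u => T.dist u v) s
    (fun u hu => by have := hpd u hu; omega) hs0 hs
  have hC : σ s(v, p v) * s (p v) =
      ((SimpleGraph.Walk.cons hvx q).edges.map σ).prod := by
    rw [hpr, hsx]; simp
  rw [hC] at hdet
  have hsq : ∀ l : List (Sym2 V), (∀ e ∈ l, e ∈ G.edgeSet) →
      (l.map σ).prod * (l.map σ).prod = 1 := by
    intro l
    induction l with
    | nil => simp
    | cons e l ih =>
      intro hl
      have h1 := ih fun e he => hl e (by simp [he])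
      have h2 := hσ2 e (hl e (by simp))
      rw [List.map_cons, List.prod_cons, mul_mul_mul_comm, h1, h2, one_mul]
  have hC2 := hsq _ (SimpleGraph.Walk.cons hvx q).edges_subset_edgeSet
  have hprod : ∏ u, w s(u, p u) = ∏ e ∈ G.edgeFinset, w e := by
    refine Finset.prod_bij (fun u _ => s(u, p u)) ?_ (fun a _ b _ h => hinj h) ?_ fun _ _ => rfl
    · intro u _; simpa using hp u
    · intro e he
      obtain ⟨u, h⟩ := hsurj e (by simpa using he)
      exact ⟨u, Finset.mem_univ _, h⟩
  rw [signedLap_eq_mul G σ w hσ p hp hinj hsurj, Matrix.det_mul, Matrix.det_mul,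
    Matrix.det_transpose, Matrix.det_diagonal, hdet, hprod]
  linear_combination (∏ e ∈ G.edgeFinset, w e) * hC2
end

section
/- Let (Σ,w) be a weighted signed graph whose underlying graph is a 1-forest (every connected component is unicyclic, i.e., has exactly as many edges as vertices). Then det L(Σ,w) = w(Σ)·∏_ψ 2(1 − σ(C_ψ)), where the product runs over the connected components ψ (each a 1-tree with unique cycle C_ψ), w(Σ) is the product of the weights of all edges, and σ(C_ψ) is the product of the signs of the edges of C_ψ. -/
open Matrix in
/-- Determinant of the signed incidence matrix of a functional graph `f` with arc signs `t`.
Components are labelled by `K` through `κ`, each with a root `vert ψ` on its cycle; `d` decreases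
along `f` away from the roots, `s v` is the product of the signs on the way from `v` to its root,
and `c ψ` is the sign of the cycle through `vert ψ`. -/
theorem det_inc {V K : Type*} [Fintype V] [DecidableEq V] [Fintype K] [DecidableEq K]
    (κ : V → K) (vert : K → V) (hvert : ∀ ψ, κ (vert ψ) = ψ)
    (f : V → V) (d : V → ℕ) (s t : V → ℝ) (c : K → ℝ)
    (hκ : ∀ v, κ (f v) = κ v)
    (hd : ∀ v, vert (κ v) ≠ v → d (f v) < d v)
    (hs1 : ∀ ψ, s (vert ψ) = 1)
    (hs : ∀ v, vert (κ v) ≠ v → s v = t v * s (f v))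
    (hc : ∀ ψ, t (vert ψ) * s (f (vert ψ)) = c ψ) :
    (Matrix.of fun u v : V => (if u = v then (1 : ℝ) else 0) - (if u = f v then t v else 0)).det
      = ∏ ψ, (1 - c ψ) := by
  set B : Matrix V V ℝ :=
    Matrix.of fun u v : V => (if u = v then (1 : ℝ) else 0) - (if u = f v then t v else 0) with hB
  -- `p` singles out the roots; left multiplication by `R` replaces the row of each root by the
  -- `s`-weighted sum of the rows of its component.
  let p : V → Prop := fun v => vert (κ v) = v
  let R : Matrix V V ℝ := Matrix.of fun u v =>
    if vert (κ u) = u then (if κ u = κ v then s v else 0) else (if u = v then 1 else 0)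
  have hR : R.det = 1 := by
    rw [twoBlockTriangular_det R p]
    · have h1 : R.toSquareBlockProp p = 1 := by
        ext ⟨i, hi⟩ ⟨j, hj⟩
        simp only [p] at hi hj
        simp only [toSquareBlockProp_def, R, of_apply, Matrix.one_apply, Subtype.mk.injEq, hi,
          if_true]
        by_cases h : κ i = κ j
        · have : i = j := by rw [← hi, ← hj, h]
          rw [if_pos h, if_pos this, ← hj, hs1]
        · rw [if_neg h, if_neg (fun h' => h (by rw [h']))]
      have h2 : R.toSquareBlockProp (fun i => ¬ p i) = 1 := by
        ext ⟨i, hi⟩ ⟨j, hj⟩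
        simp only [p] at hi hj
        simp [toSquareBlockProp_def, R, of_apply, Matrix.one_apply, hi]
      rw [h1, h2]; simp
    · intro i hi j hj
      simp only [p] at hi hj
      have : i ≠ j := by rintro rfl; exact hi hj
      simp [R, hi, this]
  have hroot : ∀ i j, vert (κ i) = i →
      (R * B) i j = if i = j then 1 - c (κ i) else 0 := by
    intro i j hi
    have : (R * B) i j = (if κ i = κ j then s j - t j * s (f j) else 0) := by
      simp only [Matrix.mul_apply, R, B, of_apply, hi, if_true, mul_sub, Finset.sum_sub_distrib]
      simp only [mul_ite, mul_one, mul_zero, Finset.sum_ite_eq', Finset.mem_univ, if_true, hκ]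
      split_ifs <;> ring
    rw [this]
    by_cases hj : vert (κ j) = j
    · by_cases h : κ i = κ j
      · have hij : i = j := by rw [← hi, ← hj, h]
        subst hij
        have := hc (κ i)
        have h1 := hs1 (κ i)
        rw [hi] at this h1
        simp [this, h1]
      · rw [if_neg h, if_neg (fun h' => h (by rw [h']))]
    · have : i ≠ j := by rintro rfl; exact hj hi
      rw [if_neg this, hs j hj]; simp
  have hnon : ∀ i j, vert (κ i) ≠ i → (R * B) i j = B i j := by
    intro i j hi
    simp [Matrix.mul_apply, R, hi]
  have hRB : (R * B).det = ∏ ψ, (1 - c ψ) := by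
    rw [twoBlockTriangular_det' (R * B) p]
    · have h1 : (R * B).toSquareBlockProp p = Matrix.diagonal fun i => 1 - c (κ i.1) := by
        ext ⟨i, hi⟩ ⟨j, hj⟩
        rw [toSquareBlockProp_def, of_apply, hroot i j hi, Matrix.diagonal_apply]
        simp
      have h2 : ((R * B).toSquareBlockProp (fun i => ¬ p i)).det = 1 := by
        have ht : ((R * B).toSquareBlockProp (fun i => ¬ p i)).BlockTriangular
            (fun i => d i.1) := by
          rintro ⟨i, hi⟩ ⟨j, hj⟩ hij
          have hdj := hd j hj
          simp only at hij
          rw [toSquareBlockProp_def, of_apply, hnon i j hi]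
          have h3 : i ≠ j := by rintro rfl; omega
          have h4 : i ≠ f j := by rintro rfl; omega
          simp [B, h3, h4]
        rw [ht.det]
        refine Finset.prod_eq_one fun a _ => ?_
        have hone : ((R * B).toSquareBlockProp (fun i => ¬ p i)).toSquareBlock
            (fun i => d i.1) a = 1 := by
          ext ⟨⟨i, hi⟩, hi'⟩ ⟨⟨j, hj⟩, hj'⟩
          have hdj := hd j hj
          simp only at hi' hj'
          rw [toSquareBlock_def, of_apply, toSquareBlockProp_def, of_apply, hnon i j hi]
          have h4 : i ≠ f j := by rintro rfl; omega
          simp [B, h4, Matrix.one_apply]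
        rw [hone, Matrix.det_one]
      rw [h1, h2, mul_one, Matrix.det_diagonal]
      refine Fintype.prod_equiv ⟨fun i => κ i.1, fun ψ => ⟨vert ψ, by simp [p, hvert]⟩, ?_, ?_⟩
        _ _ ?_
      · rintro ⟨i, hi⟩; simpa using hi
      · intro ψ; simp [hvert]
      · intro i; rfl
    · intro i hi j hj
      rw [hroot i j hi, if_neg]
      rintro rfl; exact hj hi
  rw [← hRB, Matrix.det_mul, hR, one_mul]

open Matrix in
/-- Factorization of the Laplacian through the incidence matrix, with the edge `s(v, f v)` indexed
by its tail `v`. -/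
theorem signedLap_eq {V : Type*} [Fintype V] [DecidableEq V] (G : SimpleGraph V)
    [DecidableRel G.Adj] (σ w : Sym2 V → ℝ)
    (hσ : ∀ e ∈ G.edgeSet, σ e = 1 ∨ σ e = -1)
    (f : V → V) (hadj : ∀ v, G.Adj v (f v))
    (hinj : Function.Injective fun v => s(v, f v))
    (himg : G.edgeFinset = Finset.univ.image fun v => s(v, f v))
    (B : Matrix V V ℝ)
    (hB : B = Matrix.of fun u v : V => (if u = v then (1 : ℝ) else 0) -
      (if u = f v then σ s(v, f v) else 0)) :
    signedLap G σ w = B * Matrix.diagonal (fun v => w s(v, f v)) * Bᵀ := by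
  have hsum : ∀ g : Sym2 V → ℝ, ∑ e ∈ G.edgeFinset, g e = ∑ v, g s(v, f v) := by
    intro g
    rw [himg, Finset.sum_image (fun a _ b _ h => hinj h)]
  ext i j
  have hr : (B * Matrix.diagonal (fun v => w s(v, f v)) * Bᵀ) i j =
      ∑ v, B i v * w s(v, f v) * B j v := by
    rw [Matrix.mul_apply]
    simp [Matrix.mul_diagonal]
  rw [hr]
  have hne : ∀ v, v ≠ f v := fun v => (hadj v).ne
  have hsq : ∀ v, σ s(v, f v) * σ s(v, f v) = 1 := fun v => by
    rcases hσ s(v, f v) (hadj v) with h | h <;> simp [h]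
  by_cases hij : i = j
  · subst hij
    have h1 : signedLap G σ w i i = ∑ e ∈ G.edgeFinset, if i ∈ e then w e else 0 := by
      simp only [signedLap, of_apply, if_true]
      rw [← Finset.sum_filter, ← Finset.sum_filter]
      refine Finset.sum_bij (fun k _ => s(i, k)) ?_ ?_ ?_ ?_
      · intro k hk; simpa using hk
      · intro a _ b _ h; exact Sym2.congr_right.mp h
      · intro e he
        induction e with | _ x y
        simp only [Finset.mem_filter, SimpleGraph.mem_edgeFinset, SimpleGraph.mem_edgeSet,
          Sym2.mem_iff] at he
        obtain ⟨h, rfl | rfl⟩ := he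
        · exact ⟨y, by simpa using h, rfl⟩
        · exact ⟨x, by simpa using h.symm, Sym2.eq_swap⟩
      · intros; rfl
    rw [h1, hsum]
    refine Finset.sum_congr rfl fun v _ => ?_
    have := hne v
    have h2 := hsq v
    simp only [hB, of_apply, Sym2.mem_iff]
    by_cases ha : i = v
    · subst ha; simp [this]
    · by_cases hb : i = f v
      · simp only [hb, if_true, or_true]
        rw [if_neg this.symm]
        linear_combination (-w s(v, f v)) * h2
      · simp [ha, hb]
  · have h1 : signedLap G σ w i j =
        ∑ e ∈ G.edgeFinset, if s(i, j) = e then -(σ e * w e) else 0 := by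
      simp [signedLap, hij]
    rw [h1, hsum]
    refine Finset.sum_congr rfl fun v _ => ?_
    have := hne v
    simp only [hB, of_apply, Sym2.eq_iff]
    by_cases ha : i = v
    · subst ha
      have hb : j ≠ i := Ne.symm hij
      by_cases hc : j = f i <;> simp [hc, hb, this]
      rw [if_neg this.symm]; ring
    · by_cases hb : i = f v
      · by_cases hc : j = v
        · subst hc; subst hb; simp [this, ha]
        · have hd : j ≠ f v := fun h => hij (hb.trans h.symm)
          simp [ha, hc, hd]
      · simp [ha, hb]

/-- The orientation of a graph with unicyclic components, with the data required by `det_inc`.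
Removing the first edge of every cycle `cyc ψ` leaves a spanning forest; a vertex other than a root
`vert ψ` is sent one step along its unique forest path to the root (of length `d v` and sign
product `s v`), and a root is sent along the removed edge. -/
theorem exists_orientation
    {V : Type*} [DecidableEq V] (G : SimpleGraph V) (σ : Sym2 V → ℝ)
    (vert : G.ConnectedComponent → V)
    (hvert : ∀ ψ : G.ConnectedComponent, G.connectedComponentMk (vert ψ) = ψ)
    (cyc : ∀ ψ : G.ConnectedComponent, G.Walk (vert ψ) (vert ψ))
    (hcyc : ∀ ψ : G.ConnectedComponent, (cyc ψ).IsCycle)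
    (huniq : ∀ (u : V) (c' : G.Walk u u), c'.IsCycle →
      c'.edges.toFinset = (cyc (G.connectedComponentMk u)).edges.toFinset) :
    ∃ (f : V → V) (d : V → ℕ) (s : V → ℝ),
      (∀ v, G.Adj v (f v)) ∧
      (∀ v, vert (G.connectedComponentMk v) ≠ v → d (f v) < d v) ∧
      (∀ ψ, s (vert ψ) = 1) ∧
      (∀ v, vert (G.connectedComponentMk v) ≠ v → s v = σ s(v, f v) * s (f v)) ∧
      (∀ ψ, σ s(vert ψ, f (vert ψ)) * s (f (vert ψ)) = ((cyc ψ).edges.map σ).prod) ∧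
      (Function.Injective fun v => s(v, f v)) ∧
      (∀ e ∈ G.edgeSet, ∃ v, s(v, f v) = e) := by
  have hsplit : ∀ ψ, ∃ (a : V) (h : G.Adj (vert ψ) a) (p : G.Walk a (vert ψ)),
      cyc ψ = SimpleGraph.Walk.cons h p := by
    intro ψ
    have hc := hcyc ψ
    revert hc
    cases cyc ψ with
    | nil => intro hc; simp at hc
    | cons h p => intro _; exact ⟨_, h, p, rfl⟩
  choose a ha p hp using hsplit
  have hpc : ∀ ψ, (p ψ).IsPath ∧ s(vert ψ, a ψ) ∉ (p ψ).edges := fun ψ => by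
    have := hcyc ψ
    rwa [hp, SimpleGraph.Walk.cons_isCycle_iff] at this
  -- `T` is the spanning forest obtained by removing the first edge of each cycle.
  let S : Set (Sym2 V) := Set.range fun ψ => s(vert ψ, a ψ)
  let T := G.deleteEdges S
  have hTG : T ≤ G := G.deleteEdges_le S
  have hTadj : ∀ u v, T.Adj u v ↔ G.Adj u v ∧ s(u, v) ∉ S := fun u v => by
    simp [T, SimpleGraph.deleteEdges_adj]
  have hpT : ∀ ψ, ∀ e ∈ (p ψ).edges, e ∈ T.edgeSet := by
    intro ψ e he
    have heG := (p ψ).edges_subset_edgeSet he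
    simp only [T, SimpleGraph.edgeSet_deleteEdges, Set.mem_sdiff]
    refine ⟨heG, ?_⟩
    rintro ⟨ψ', rfl⟩
    have h1 : vert ψ' ∈ (p ψ).support := (p ψ).fst_mem_support_of_mem_edges he
    have h2 : G.Reachable (vert ψ') (vert ψ) := ⟨(p ψ).dropUntil _ h1⟩
    have h3 : ψ' = ψ := by
      rw [← hvert ψ', ← hvert ψ]; exact SimpleGraph.ConnectedComponent.sound h2
    subst h3
    exact (hpc ψ').2 he
  have hacyc : T.IsAcyclic := by
    intro u c hc
    have h1 := huniq u (c.mapLe hTG) (hc.mapLe hTG)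
    rw [SimpleGraph.Walk.edges_mapLe_eq_edges] at h1
    set ψ := G.connectedComponentMk u
    have h2 : s(vert ψ, a ψ) ∈ c.edges := by
      rw [← List.mem_toFinset, h1, hp]; simp
    have h3 := c.edges_subset_edgeSet h2
    rw [SimpleGraph.mem_edgeSet, hTadj] at h3
    exact h3.2 ⟨ψ, rfl⟩
  have hreachAdj : ∀ u v, G.Adj u v → T.Reachable u v := by
    intro u v h
    by_cases hS : s(u, v) ∈ S
    · obtain ⟨ψ, hψ⟩ := hS
      have h1 : T.Reachable (a ψ) (vert ψ) := ⟨(p ψ).transfer T (hpT ψ)⟩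
      simp only [Sym2.eq_iff] at hψ
      obtain ⟨rfl, rfl⟩ | ⟨rfl, rfl⟩ := hψ
      · exact h1.symm
      · exact h1
    · exact ((hTadj u v).2 ⟨h, hS⟩).reachable
  have hreach : ∀ u v, G.Reachable u v → T.Reachable u v := by
    rintro u v ⟨q⟩
    induction q with
    | nil => exact SimpleGraph.Reachable.refl _
    | cons h _ ih => exact (hreachAdj _ _ h).trans ih
  have hP : ∀ v, ∃ q : T.Walk v (vert (G.connectedComponentMk v)), q.IsPath := by
    intro v
    obtain ⟨q⟩ := hreach v (vert (G.connectedComponentMk v))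
      (SimpleGraph.ConnectedComponent.exact (hvert _).symm)
    exact ⟨q.bypass, q.bypass_isPath⟩
  choose P hPP using hP
  -- `T` is acyclic, so any path to a root agrees with the chosen one; the equalities are stated
  -- for invariants of the walks because the endpoints agree only propositionally.
  have key : ∀ (u : V) (ψ : G.ConnectedComponent) (q : T.Walk u (vert ψ)), q.IsPath →
      (P u).length = q.length ∧ (P u).edges = q.edges ∧ (P u).snd = q.snd := by
    intro u ψ q hq
    have h1 : ψ = G.connectedComponentMk u := by
      rw [← hvert ψ]
      exact SimpleGraph.ConnectedComponent.sound (SimpleGraph.Reachable.mono hTG ⟨q⟩).symm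
    subst h1
    have := congrArg Subtype.val 
      ((hacyc.subsingleton_path _ _).elim ⟨P u, hPP u⟩ ⟨q, hq⟩)
    simp only at this
    rw [this]; simp
  have step : ∀ v, vert (G.connectedComponentMk v) ≠ v →
      T.Adj v (P v).snd ∧ (P (P v).snd).length < (P v).length ∧
      ((P v).edges.map σ).prod = σ s(v, (P v).snd) * ((P (P v).snd).edges.map σ).prod := by
    intro v hv
    have hnn : ¬ (P v).Nil := fun h => hv h.eq.symm
    have h1 := key _ _ (P v).tail (hPP v).tail
    have h2 := SimpleGraph.Walk.cons_tail_eq (P v) hnn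
    refine ⟨(P v).adj_snd hnn, ?_, ?_⟩
    · rw [h1.1, ← SimpleGraph.Walk.length_tail_add_one hnn]; omega
    · rw [h1.2.1]
      conv_lhs => rw [← h2]
      simp
  have hroot : ∀ ψ, (P (vert ψ)).length = 0 := fun ψ => (key (vert ψ) ψ .nil (by simp)).1
  have hroot' : ∀ v, vert (G.connectedComponentMk v) = v → (P v).length = 0 := by
    intro v hv
    have := hroot (G.connectedComponentMk v)
    rwa [hv] at this
  let f : V → V := fun v => if vert (G.connectedComponentMk v) = v
    then a (G.connectedComponentMk v) else (P v).snd
  have hf0 : ∀ ψ, f (vert ψ) = a ψ := fun ψ => by simp [f, hvert]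
  have hf1 : ∀ v, vert (G.connectedComponentMk v) ≠ v → f v = (P v).snd := fun v hv => by
    simp [f, hv]
  have hcase : ∀ v, (∃ ψ, v = vert ψ) ∨ vert (G.connectedComponentMk v) ≠ v := fun v => by
    by_cases h : vert (G.connectedComponentMk v) = v
    · exact .inl ⟨_, h.symm⟩
    · exact .inr h
  refine ⟨f, fun v => (P v).length, fun v => ((P v).edges.map σ).prod, ?_, ?_, ?_, ?_, ?_, ?_, ?_⟩
  · intro v
    obtain ⟨ψ, rfl⟩ | h := hcase v
    · rw [hf0]; exact ha ψ
    · rw [hf1 v h]; exact hTG (step v h).1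
  · intro v h
    have := (step v h).2.1
    rwa [← hf1 v h] at this
  · intro ψ
    have : (P (vert ψ)).edges = [] := by
      rw [← List.length_eq_zero_iff, SimpleGraph.Walk.length_edges, hroot]
    simp [this]
  · intro v h
    have := (step v h).2.2
    rwa [← hf1 v h] at this
  · intro ψ
    have := (key (a ψ) ψ ((p ψ).transfer T (hpT ψ)) ((hpc ψ).1.transfer _)).2.1
    rw [SimpleGraph.Walk.edges_transfer] at this
    rw [hp, SimpleGraph.Walk.edges_cons, List.map_cons, List.prod_cons, ← this]
    simp only []
    rw [hf0]
  · have hmix : ∀ ψ v, vert (G.connectedComponentMk v) ≠ v →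
        s(vert ψ, f (vert ψ)) ≠ s(v, f v) := by
      intro ψ v h he
      have h1 := (step v h).1
      rw [← hf1 v h, hTadj, ← he, hf0] at h1
      exact h1.2 ⟨ψ, rfl⟩
    intro u v huv
    simp only at huv
    obtain ⟨ψ, rfl⟩ | hu := hcase u <;> obtain ⟨φ, rfl⟩ | hv := hcase v
    -- Two removed edges that agree lie in the same component, hence have the same root.
    · have h1 : vert φ ∈ s(vert ψ, f (vert ψ)) := by rw [huv]; simp
      rw [hf0, Sym2.mem_iff] at h1
      obtain h1 | h1 := h1
      · exact h1.symm
      · have h2 : G.connectedComponentMk (vert ψ) = G.connectedComponentMk (vert φ) := by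
          rw [h1]; exact SimpleGraph.ConnectedComponent.sound (ha ψ).reachable
        rw [hvert, hvert] at h2
        rw [h2]
    · exact absurd huv (hmix ψ v hv)
    · exact absurd huv.symm (hmix φ u hu)
    · rw [Sym2.eq_iff] at huv
      obtain h | ⟨h1, h2⟩ := huv
      · exact h.1
      · have h3 := (step u hu).2.1
        have h4 := (step v hv).2.1
        rw [← hf1 u hu, h2] at h3
        rw [← hf1 v hv, ← h1] at h4
        omega
  · intro e he
    by_cases hS : e ∈ S
    · obtain ⟨ψ, rfl⟩ := hS
      exact ⟨vert ψ, by rw [hf0]⟩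
    · induction e with | _ x y
      have hxy : T.Adj x y := (hTadj x y).2 ⟨he, hS⟩
      -- Of the two ends, the one whose path to the root contains the other is the tail.
      by_cases hy : y ∈ (P x).support
      · have hx : vert (G.connectedComponentMk x) ≠ x := by
          intro h
          have h1 := SimpleGraph.Walk.nil_iff_support_eq.mp
            (SimpleGraph.Walk.length_eq_zero_iff.mp (hroot' x h))
          rw [h1, List.mem_singleton] at hy
          exact hxy.ne hy.symm
        exact ⟨x, by rw [hf1 x hx, ← hacyc.eq_snd_of_adj_start (hPP x) hxy hy]⟩
      · have h1 := key y _ (.cons hxy.symm (P x)) ((hPP x).cons hy)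
        have hy' : vert (G.connectedComponentMk y) ≠ y := by
          intro h
          have h2 := h1.1
          rw [hroot' y h, SimpleGraph.Walk.length_cons] at h2
          omega
        refine ⟨y, ?_⟩
        rw [hf1 y hy', h1.2.2, SimpleGraph.Walk.snd_cons, Sym2.eq_swap]

/-- If the underlying graph of a weighted signed graph `(Σ,w)` is a
`1`-forest (every connected component `ψ` is unicyclic, with unique cycle `C_ψ`, here
given by the family of cycles `cyc`), then
`det L(Σ,w) = w(Σ) ⬝ ∏_ψ 2(1 - σ(C_ψ))`, where the product runs over the connected
components, `w(Σ)` is the product of the weights of all edges, and `σ(C_ψ)` is the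
product of the signs of the edges of `C_ψ`. -/
theorem det_signedLap_one_forest
    {V : Type*} [Fintype V] [DecidableEq V] (G : SimpleGraph V) [DecidableRel G.Adj]
    [Fintype G.ConnectedComponent]
    (σ w : Sym2 V → ℝ)
    (hσ : ∀ e ∈ G.edgeSet, σ e = 1 ∨ σ e = -1)
    (hw : ∀ e ∈ G.edgeSet, 0 < w e)
    (vert : G.ConnectedComponent → V)
    (hvert : ∀ ψ : G.ConnectedComponent, G.connectedComponentMk (vert ψ) = ψ)
    (cyc : ∀ ψ : G.ConnectedComponent, G.Walk (vert ψ) (vert ψ))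
    (hcyc : ∀ ψ : G.ConnectedComponent, (cyc ψ).IsCycle)
    (huniq : ∀ (u : V) (c' : G.Walk u u), c'.IsCycle →
      c'.edges.toFinset = (cyc (G.connectedComponentMk u)).edges.toFinset) :
    (signedLap G σ w).det =
      (∏ e ∈ G.edgeFinset, w e) *
        ∏ ψ : G.ConnectedComponent, (2 * (1 - ((cyc ψ).edges.map σ).prod)) := by
  classical
  obtain ⟨f, d, s, hadj, hd, hs1, hs, hc, hinj, hsurj⟩ :=
    exists_orientation G σ vert hvert cyc hcyc huniq
  have himg : G.edgeFinset = Finset.univ.image fun v => s(v, f v) := by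
    ext e
    simp only [SimpleGraph.mem_edgeFinset, Finset.mem_image, Finset.mem_univ, true_and]
    refine ⟨hsurj e, ?_⟩
    rintro ⟨v, rfl⟩
    exact hadj v
  have hdet := det_inc G.connectedComponentMk vert hvert f d s (fun v => σ s(v, f v))
    (fun ψ => ((cyc ψ).edges.map σ).prod)
    (fun v => SimpleGraph.ConnectedComponent.sound (hadj v).symm.reachable) hd hs1 hs hc
  rw [signedLap_eq G σ w hσ f hadj hinj himg _ rfl, Matrix.det_mul, Matrix.det_mul,
    Matrix.det_transpose, Matrix.det_diagonal, hdet, himg,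
    Finset.prod_image (fun a _ b _ h => hinj h), mul_comm (∏ ψ, _), mul_assoc,
    ← Finset.prod_mul_distrib]
  congr 1
  refine Finset.prod_congr rfl fun ψ _ => ?_
  have hsign : ∀ l : List (Sym2 V), (∀ e ∈ l, e ∈ G.edgeSet) →
      (l.map σ).prod = 1 ∨ (l.map σ).prod = -1 := by
    intro l
    induction l with
    | nil => simp
    | cons e l ih =>
      intro h
      rcases hσ e (h e (by simp)) with h1 | h1 <;>
        rcases ih (fun e' he' => h e' (by simp [he'])) with h2 | h2 <;> simp [h1, h2]
  rcases hsign (cyc ψ).edges (fun e he => (cyc ψ).edges_subset_edgeSet he) with h | h <;>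
    rw [h] <;> norm_num
end

section
/- Let (Σ,w) be a weighted signed graph on n vertices and let Ψ be a spanning subgraph of Σ having exactly n edges (with the induced signs and weights). Then det L(Ψ,w) ≠ 0 if and only if Ψ is a contrabalanced 1-forest, i.e., every component of Ψ is unicyclic and every cycle in Ψ has negative sign product. -/
lemma signedLap_mulVec_apply {V : Type*} [Fintype V] [DecidableEq V] (G : SimpleGraph V)
    [DecidableRel G.Adj] (σ w : Sym2 V → ℝ) (x : V → ℝ) (i : V) :
    (signedLap G σ w).mulVec x i =
      ∑ k, if G.Adj i k then w s(i, k) * (x i - σ s(i, k) * x k) else 0 := by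
  have h : ∀ k, signedLap G σ w i k * x k =
      (if i = k then (∑ l, if G.Adj i l then w s(i, l) else 0) * x i else 0) -
        (if G.Adj i k then σ s(i, k) * w s(i, k) * x k else 0) := by
    intro k
    by_cases hik : i = k
    · subst hik
      simp [signedLap]
    · by_cases ha : G.Adj i k <;> simp [signedLap, hik, ha]
  simp only [Matrix.mulVec, dotProduct, h]
  rw [Finset.sum_sub_distrib, Finset.sum_ite_eq, if_pos (Finset.mem_univ i), Finset.sum_mul,
    ← Finset.sum_sub_distrib]
  refine Finset.sum_congr rfl fun k _ => ?_
  split_ifs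
  · ring
  · ring

/-- The kernel of the signed Laplacian: positivity of the weights makes every summand of the
quadratic form vanish. -/
lemma signedLap_mulVec_eq_zero_iff {V : Type*} [Fintype V] [DecidableEq V] (G : SimpleGraph V)
    [DecidableRel G.Adj] (σ w : Sym2 V → ℝ)
    (hσ : ∀ e ∈ G.edgeSet, σ e = 1 ∨ σ e = -1) (hw : ∀ e ∈ G.edgeSet, 0 < w e) (x : V → ℝ) :
    (signedLap G σ w).mulVec x = 0 ↔ ∀ i j, G.Adj i j → x i = σ s(i, j) * x j := by
  constructor
  · intro h
    have h1 : ∑ i, ∑ k, (if G.Adj i k then w s(i, k) * (x i - σ s(i, k) * x k) * x i else 0)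
        = 0 := by
      refine Finset.sum_eq_zero fun i _ => ?_
      have := congrFun h i
      rw [signedLap_mulVec_apply] at this
      calc _ = (∑ k, if G.Adj i k then w s(i, k) * (x i - σ s(i, k) * x k) else 0) * x i := by
            rw [Finset.sum_mul]
            exact Finset.sum_congr rfl fun k _ => by split_ifs <;> ring
        _ = 0 := by rw [this]; simp
    have h2 := h1
    rw [Finset.sum_comm] at h2
    -- Adding the sum to its copy with `i` and `k` exchanged completes the squares.
    have h3 : ∑ i, ∑ k, (if G.Adj i k then w s(i, k) * (x i - σ s(i, k) * x k) ^ 2 else 0)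
        = 0 := by
      refine Eq.trans ?_ ((congrArg₂ (· + ·) h1 h2).trans (add_zero 0))
      rw [← Finset.sum_add_distrib]
      refine Finset.sum_congr rfl fun i _ => ?_
      rw [← Finset.sum_add_distrib]
      refine Finset.sum_congr rfl fun k _ => ?_
      by_cases ha : G.Adj i k
      · rw [if_pos ha, if_pos ha, if_pos ha.symm, Sym2.eq_swap (a := k)]
        rcases hσ s(i, k) ha with hs | hs <;> rw [hs] <;> ring
      · rw [if_neg ha, if_neg ha, if_neg fun hb => ha hb.symm, add_zero]
    have nonneg : ∀ i k,
        0 ≤ if G.Adj i k then w s(i, k) * (x i - σ s(i, k) * x k) ^ 2 else 0 := by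
      intro i k
      split_ifs with ha
      · exact mul_nonneg (hw s(i, k) ha).le (sq_nonneg _)
      · exact le_rfl
    intro i j hij
    have h4 := (Finset.sum_eq_zero_iff_of_nonneg
      (fun i _ => Finset.sum_nonneg fun k _ => nonneg i k)).1 h3 i (Finset.mem_univ i)
    have h5 := (Finset.sum_eq_zero_iff_of_nonneg (fun k _ => nonneg i k)).1 h4 j
      (Finset.mem_univ j)
    rw [if_pos hij] at h5
    have h6 := (mul_eq_zero.1 h5).resolve_left (hw s(i, j) hij).ne'
    exact sub_eq_zero.1 (pow_eq_zero_iff two_ne_zero |>.1 h6)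
  · intro h
    funext i
    rw [signedLap_mulVec_apply]
    refine Finset.sum_eq_zero fun k _ => ?_
    split_ifs with ha
    · rw [← h i k ha]; simp
    · rfl

/-- Transport of a solution of the edge equations along a walk. -/
lemma eq_prod_mul_of_walk {V : Type*} {G : SimpleGraph V} (σ : Sym2 V → ℝ) (x : V → ℝ)
    {u v : V} (p : G.Walk u v)
    (h : ∀ i j, s(i, j) ∈ p.edges → x i = σ s(i, j) * x j) :
    x u = (p.edges.map σ).prod * x v := by
  induction p with
  | nil => simp
  | cons hadj p ih =>
    rw [SimpleGraph.Walk.edges_cons] at h ⊢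
    rw [List.map_cons, List.prod_cons, mul_assoc,
      ← ih fun i j hij => h i j (List.mem_cons_of_mem _ hij)]
    exact h _ _ List.mem_cons_self

lemma prod_eq_one_or_neg_one (l : List ℝ) (h : ∀ a ∈ l, a = 1 ∨ a = -1) :
    l.prod = 1 ∨ l.prod = -1 := by
  induction l with
  | nil => simp
  | cons a l ih =>
    rw [List.prod_cons]
    rcases h a List.mem_cons_self with ha | ha <;>
      rcases ih fun b hb => h b (List.mem_cons_of_mem _ hb) with hl | hl <;> simp [ha, hl]

/-- Fewer edge equations than vertices always leave a nonzero solution. -/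
lemma exists_ne_zero_of_card_lt {W : Type*} [Fintype W] (τ : Sym2 W → ℝ) (S : Finset (Sym2 W))
    (hτ : ∀ e ∈ S, τ e = 1 ∨ τ e = -1) (hS : S.card < Fintype.card W) :
    ∃ x : W → ℝ, x ≠ 0 ∧ ∀ i j, s(i, j) ∈ S → x i = τ s(i, j) * x j := by
  -- Each edge is oriented by `Quot.out`; since `τ = ±1` the choice does not affect the equation.
  let f : (W → ℝ) →ₗ[ℝ] (S → ℝ) := LinearMap.pi fun e =>
    LinearMap.proj (Quot.out e.1).1 - τ e.1 • LinearMap.proj (Quot.out e.1).2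
  have hker : LinearMap.ker f ≠ ⊥ := LinearMap.ker_ne_bot_of_finrank_lt (by simpa using hS)
  obtain ⟨x, hx, hx0⟩ := (Submodule.ne_bot_iff _).1 hker
  refine ⟨x, hx0, fun i j hij => ?_⟩
  have h := congrFun (LinearMap.mem_ker.1 hx) ⟨s(i, j), hij⟩
  simp only [f, LinearMap.pi_apply, LinearMap.sub_apply, LinearMap.smul_apply, LinearMap.proj_apply,
    Pi.zero_apply, smul_eq_mul] at h
  have hout : s((Quot.out s(i, j)).1, (Quot.out s(i, j)).2) = s(i, j) := Quot.out_eq s(i, j)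
  rcases Sym2.eq_iff.1 hout with ⟨h1, h2⟩ | ⟨h1, h2⟩
  · rw [h1, h2] at h
    linarith
  · rw [h1, h2] at h
    rcases hτ _ hij with hs | hs <;> rw [hs] at h ⊢ <;> linarith

/-- If a component has no cycle, the edge equations have a nonzero solution supported on it. -/
lemma exists_ne_zero_of_acyclic_component {V : Type*} [Fintype V] (G : SimpleGraph V)
    (σ : Sym2 V → ℝ) (hσ : ∀ e ∈ G.edgeSet, σ e = 1 ∨ σ e = -1) (ψ : G.ConnectedComponent)
    (hψ : ∀ (u : V) (c : G.Walk u u), G.connectedComponentMk u = ψ → ¬ c.IsCycle) :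
    ∃ x : V → ℝ, x ≠ 0 ∧ ∀ i j, G.Adj i j → x i = σ s(i, j) * x j := by
  classical
  have htree : ψ.toSimpleGraph.IsTree := by
    refine ⟨ψ.connected_toSimpleGraph, fun u c hc => ?_⟩
    exact hψ _ (c.map ψ.toSimpleGraph_hom) u.2
      ((SimpleGraph.Walk.isCycle_map_iff_of_injective Subtype.val_injective).2 hc)
  have hcard := htree.card_edgeFinset
  obtain ⟨y, hy0, hy⟩ := exists_ne_zero_of_card_lt (fun e => σ (e.map Subtype.val))
    ψ.toSimpleGraph.edgeFinset
    (by
      intro e he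
      induction e with
      | _ a b =>
        rw [SimpleGraph.mem_edgeFinset] at he
        exact hσ s(a.1, b.1) he)
    (by omega)
  refine ⟨fun v => if hv : v ∈ ψ then y ⟨v, hv⟩ else 0, fun h0 => hy0 ?_, fun i j hij => ?_⟩
  · funext v
    simpa [v.2] using congrFun h0 v.1
  · have hiff : i ∈ ψ ↔ j ∈ ψ := by
      change G.connectedComponentMk i = ψ ↔ G.connectedComponentMk j = ψ
      rw [SimpleGraph.ConnectedComponent.sound hij.reachable]
    by_cases hi : i ∈ ψ
    · have hj := hiff.1 hi
      simp only [hi, hj, dif_pos]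
      refine hy ⟨i, hi⟩ ⟨j, hj⟩ ?_
      rw [SimpleGraph.mem_edgeFinset]
      exact hij
    · have hj : j ∉ ψ := fun h => hi (hiff.2 h)
      simp [hi, hj]

/-- If some cycle is positive, one of its edge equations is redundant, so a graph with `|V|` edges
has a nonzero solution of its edge equations. -/
lemma exists_ne_zero_of_positive_cycle {V : Type*} [Fintype V] [DecidableEq V] (G : SimpleGraph V)
    [DecidableRel G.Adj] (σ : Sym2 V → ℝ) (hσ : ∀ e ∈ G.edgeSet, σ e = 1 ∨ σ e = -1)
    (hcard : G.edgeFinset.card = Fintype.card V)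
    {u : V} (c : G.Walk u u) (hc : c.IsCycle) (hpos : (c.edges.map σ).prod = 1) :
    ∃ x : V → ℝ, x ≠ 0 ∧ ∀ i j, G.Adj i j → x i = σ s(i, j) * x j := by
  cases c with
  | nil => exact absurd hc SimpleGraph.Walk.not_isCycle_nil
  | @cons _ v _ huv p =>
    have hnot : s(u, v) ∉ p.edges := (SimpleGraph.Walk.cons_isCycle_iff p huv).1 hc |>.2
    have hmem : s(u, v) ∈ G.edgeFinset := SimpleGraph.mem_edgeFinset.2 huv
    obtain ⟨x, hx0, hx⟩ := exists_ne_zero_of_card_lt σ (G.edgeFinset.erase s(u, v))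
      (fun e he => hσ e (SimpleGraph.mem_edgeFinset.1 (Finset.mem_of_mem_erase he)))
      (by rw [← hcard]; exact Finset.card_erase_lt_of_mem hmem)
    have hvu : x v = (p.edges.map σ).prod * x u := by
      refine eq_prod_mul_of_walk σ x p fun i j hij => hx i j ?_
      refine Finset.mem_erase.2 ⟨fun h => hnot (h ▸ hij), ?_⟩
      exact SimpleGraph.mem_edgeFinset.2 (p.edges_subset_edgeSet hij)
    rw [SimpleGraph.Walk.edges_cons, List.map_cons, List.prod_cons] at hpos
    have huv' : x u = σ s(u, v) * x v := by rw [hvu, ← mul_assoc, hpos, one_mul]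
    refine ⟨x, hx0, fun i j hij => ?_⟩
    by_cases he : s(i, j) = s(u, v)
    · rw [he]
      rcases Sym2.eq_iff.1 he with ⟨rfl, rfl⟩ | ⟨rfl, rfl⟩
      · exact huv'
      · rcases hσ s(j, i) huv with hs | hs <;> rw [hs] at huv' ⊢ <;> linarith
    · exact hx i j (Finset.mem_erase.2 ⟨he, SimpleGraph.mem_edgeFinset.2 hij⟩)


/-- Let `(Σ,w)` be a weighted signed graph on `n` vertices and `Ψ` a
spanning subgraph with exactly `n` edges (with the induced signs and weights). Then
`det L(Ψ,w) ≠ 0` if and only if `Ψ` is a contrabalanced `1`-forest, i.e. (given that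
`Ψ` has exactly `n` edges) every connected component of `Ψ` contains a cycle (so every
component is unicyclic, `Ψ` having no tree component) and every cycle in `Ψ` has
negative sign product. -/
theorem det_signedLap_ne_zero_iff_contrabalanced_one_forest
    {V : Type*} [Fintype V] [DecidableEq V] (G : SimpleGraph V) [DecidableRel G.Adj]
    (σ w : Sym2 V → ℝ)
    (hσ : ∀ e ∈ G.edgeSet, σ e = 1 ∨ σ e = -1)
    (hw : ∀ e ∈ G.edgeSet, 0 < w e)
    (Ψ : SimpleGraph V) [DecidableRel Ψ.Adj]
    (hspan : Ψ ≤ G)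
    (hcard : Ψ.edgeFinset.card = Fintype.card V) :
    (signedLap Ψ σ w).det ≠ 0 ↔
      ((∀ ψ : Ψ.ConnectedComponent,
          ∃ (u : V) (c : Ψ.Walk u u), Ψ.connectedComponentMk u = ψ ∧ c.IsCycle) ∧
        (∀ (u : V) (c : Ψ.Walk u u), c.IsCycle → (c.edges.map σ).prod = -1)) := by
  have hσ' : ∀ e ∈ Ψ.edgeSet, σ e = 1 ∨ σ e = -1 := fun e he =>
    hσ e (SimpleGraph.edgeSet_mono hspan he)
  have hw' : ∀ e ∈ Ψ.edgeSet, 0 < w e := fun e he => hw e (SimpleGraph.edgeSet_mono hspan he)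
  have key : (signedLap Ψ σ w).det = 0 ↔
      ∃ x : V → ℝ, x ≠ 0 ∧ ∀ i j, Ψ.Adj i j → x i = σ s(i, j) * x j := by
    rw [← Matrix.exists_mulVec_eq_zero_iff]
    simp only [signedLap_mulVec_eq_zero_iff Ψ σ w hσ' hw']
  rw [Ne, key]
  constructor
  · intro h
    refine ⟨fun ψ => ?_, fun u c hc => ?_⟩
    · by_contra hψ
      push Not at hψ
      exact h (exists_ne_zero_of_acyclic_component Ψ σ hσ' ψ hψ)
    · refine (prod_eq_one_or_neg_one _ fun a ha => ?_).resolve_left fun hpos =>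
        h (exists_ne_zero_of_positive_cycle Ψ σ hσ' hcard c hc hpos)
      obtain ⟨e, he, rfl⟩ := List.mem_map.1 ha
      exact hσ' e (c.edges_subset_edgeSet he)
  · rintro ⟨hcyc, hneg⟩ ⟨x, hx0, hx⟩
    refine hx0 (funext fun v => ?_)
    obtain ⟨u, c, hu, hc⟩ := hcyc (Ψ.connectedComponentMk v)
    have hxu := eq_prod_mul_of_walk σ x c fun i j hij => hx i j (c.edges_subset_edgeSet hij)
    rw [hneg u c hc] at hxu
    have hu0 : x u = 0 := by linarith
    obtain ⟨p⟩ := SimpleGraph.ConnectedComponent.exact hu.symm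
    rw [eq_prod_mul_of_walk σ x p fun i j hij => hx i j (p.edges_subset_edgeSet hij), hu0]
    simp
end

section
/- For any weighted signed graph (Σ,w) on a finite simple graph G, det L(Σ,w) = ∑_Ψ 4^{c(Ψ)} · w(Ψ), where the summation runs over all contrabalanced spanning 1-forests Ψ of G (with induced signs and weights), c(Ψ) denotes the number of connected components of Ψ, and w(Ψ) is the product of the weights of the edges of Ψ. -/
/-! The Laplacian is the sum over the edges `e` of the rank-one matrices `w(e) b_e b_eᵀ`, where
`b_e = 1_a - σ(e) 1_b` is the signed incidence vector of `e = {a, b}` (`signedLap_apply`). By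
Cauchy–Binet (`det_sum_rankOne`) its determinant is the sum, over the spanning subgraphs `Ψ`
with as many edges as vertices, of `w(Ψ) (det B_Ψ)²`, where `B_Ψ` is the square integer matrix
with rows `b_e`, `e ∈ Ψ` (`det_edge_subset`). It remains to compute `det B_Ψ`
(`det_incMat_sq`).

* If some component of `Ψ` has no cycle, it is a tree with `k` vertices and `k - 1` edges, so
  `k` columns of `B_Ψ` are supported on `k - 1` rows and the determinant vanishes
  (`det_incMat_of_acyclic_component`).
* If `Ψ` has a positive cycle, the rows of its edges are linearly dependent
  (`det_incMat_of_pos_cycle`).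
* Otherwise every component contains a negative cycle. The absolute value of the determinant
  is the index in `ℤ^V` of the lattice spanned by the rows. Telescoping around a negative cycle
  and along walks shows that this lattice contains every `2 · 1_v`, and every `1_u - 1_v` with
  `u`, `v` in the same component; hence it is the kernel of the surjection
  `ℤ^V → (ℤ/2)^c` taking the parity of the sum over each component
  (`span_incMat_eq_ker`), and the index is `2^c` (`natAbs_det_incMat`).
-/

open Classical

/-! ### The Laplacian as a sum of rank-one matrices -/

/-- The oriented incidence vector of a signed pair `e = {a, b}`, namely `1_a - s(e) 1_b`.
Which end plays the role of `a` is fixed arbitrarily by `Quot.out`; swapping the ends only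
changes the vector by a sign when `s e = ±1`. -/
noncomputable def edgeVec {V : Type*} [DecidableEq V] (s : Sym2 V → ℤ) (e : Sym2 V) : V → ℤ :=
  Pi.single (Quot.out e).1 1 - s e • Pi.single (Quot.out e).2 1

lemma edgeVec_mk {V : Type*} [DecidableEq V] {s : Sym2 V → ℤ} (hs : ∀ e, s e = 1 ∨ s e = -1)
    (u v : V) : ∃ ε : ℤ, ε * ε = 1 ∧ edgeVec s s(u, v) =
      ε • (Pi.single u 1 - s s(u, v) • Pi.single v 1) := by
  have h : s((Quot.out s(u, v)).1, (Quot.out s(u, v)).2) = s(u, v) := Quot.out_eq s(u, v)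
  rcases Sym2.eq_iff.1 h with ⟨h1, h2⟩ | ⟨h1, h2⟩
  · exact ⟨1, by simp, by simp [edgeVec, h1, h2]⟩
  · refine ⟨-s s(u, v), ?_, ?_⟩
    · rcases hs s(u, v) with h | h <;> simp [h]
    · rcases hs s(u, v) with h | h <;> (simp [edgeVec, h1, h2, h]; try abel)

lemma edgeVec_mul_edgeVec {V : Type*} [DecidableEq V] {s : Sym2 V → ℤ}
    (hs : ∀ e, s e = 1 ∨ s e = -1) {e : Sym2 V} (he : ¬ e.IsDiag) (i j : V) :
    edgeVec s e i * edgeVec s e j =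
      if i = j then (if i ∈ e then 1 else 0) else if e = s(i, j) then - s e else 0 := by
  induction e using Sym2.ind with
  | _ u v =>
    have huv : u ≠ v := by simpa using he
    obtain ⟨ε, hε, h⟩ := edgeVec_mk hs u v
    have hss : s s(u, v) * s s(u, v) = 1 := by rcases hs s(u, v) with h | h <;> simp [h]
    have : edgeVec s s(u, v) i * edgeVec s s(u, v) j =
        ((Pi.single u 1 - s s(u, v) • Pi.single v 1 : V → ℤ) i) *
        ((Pi.single u 1 - s s(u, v) • Pi.single v 1 : V → ℤ) j) := by
      rw [h]; simp only [Pi.smul_apply, smul_eq_mul]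
      linear_combination (((Pi.single u 1 - s s(u, v) • Pi.single v 1 : V → ℤ) i) *
        ((Pi.single u 1 - s s(u, v) • Pi.single v 1 : V → ℤ) j)) * hε
    rw [this]
    simp only [Pi.sub_apply, Pi.smul_apply, smul_eq_mul, Pi.single_apply, Sym2.mem_iff,
      Sym2.eq_iff]
    grind

lemma signedLap_apply {V : Type*} [Fintype V] [DecidableEq V] (G : SimpleGraph V)
    [DecidableRel G.Adj] {σ w : Sym2 V → ℝ} {s : Sym2 V → ℤ}
    (hs : ∀ e, s e = 1 ∨ s e = -1) (hsσ : ∀ e ∈ G.edgeSet, σ e = s e) (i j : V) :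
    signedLap G σ w i j =
      ∑ e ∈ G.edgeFinset, (w e * (edgeVec s e i : ℝ)) * (edgeVec s e j : ℝ) := by
  have key : ∀ e ∈ G.edgeFinset, (w e * (edgeVec s e i : ℝ)) * (edgeVec s e j : ℝ) =
      if i = j then (if i ∈ e then w e else 0) else
        if e = s(i, j) then -(σ e * w e) else 0 := by
    intro e he
    rw [SimpleGraph.mem_edgeFinset] at he
    rw [mul_assoc, ← Int.cast_mul, edgeVec_mul_edgeVec hs (G.not_isDiag_of_mem_edgeSet he),
      hsσ e he]
    split_ifs <;> push_cast <;> ring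
  rw [Finset.sum_congr rfl key]
  simp only [signedLap, Matrix.of_apply]
  split_ifs with hij hadj
  · rw [← Finset.sum_filter, ← Finset.sum_filter]
    refine Finset.sum_bij (fun k _ => s(i, k)) ?_ ?_ ?_ ?_
    · intro k hk; simpa using hk
    · intro a _ b _ h; exact Sym2.congr_right.1 h
    · intro e he
      rw [Finset.mem_filter, SimpleGraph.mem_edgeFinset] at he
      obtain ⟨k, rfl⟩ := he.2
      exact ⟨k, by simpa using he.1, rfl⟩
    · intros; rfl
  · rw [Finset.sum_ite_eq', if_pos (by simpa using hadj)]
  · rw [Finset.sum_ite_eq', if_neg (by simpa using hadj)]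

/-! ### Cauchy–Binet -/

/-- A form of the Cauchy–Binet formula: the determinant of a sum of rank-one matrices
indexed by `F` is the sum of the determinants of its subsums over the subsets of `F` of the
size of the matrix. -/
lemma det_sum_rankOne {n E R : Type*} [Fintype n] [DecidableEq n] [CommRing R]
    (F : Finset E) (A : n → E → R) (C : E → n → R) :
    (Matrix.of fun i j => ∑ e ∈ F, A i e * C e j).det =
      ∑ S ∈ F.powersetCard (Fintype.card n),
        (Matrix.of fun i j => ∑ e ∈ S, A i e * C e j).det := by
  -- the multilinear expansion along rows: one term for each choice of an index for each row
  have expand : ∀ S : Finset E, (Matrix.of fun i j => ∑ e ∈ S, A i e * C e j).det =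
      ∑ r ∈ Fintype.piFinset (fun _ : n => S),
        (∏ i, A i (r i)) * (Matrix.of fun i j => C (r i) j).det := by
    intro S
    have h := (Matrix.detRowAlternating (n := n) (R := R)).toMultilinearMap.map_sum_finset
      (fun i e => A i e • C e) (fun _ => S)
    have h1 : (Matrix.of fun i j => ∑ e ∈ S, A i e * C e j) =
        fun i => ∑ e ∈ S, A i e • C e := by
      ext i j; simp
    rw [h1]
    refine h.trans (Finset.sum_congr rfl fun r _ => ?_)
    rw [MultilinearMap.map_smul_univ]
    rfl
  have zero : ∀ r : n → E, ¬ Function.Injective r →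
      (∏ i, A i (r i)) * (Matrix.of fun i j => C (r i) j).det = 0 := by
    intro r hr
    simp only [Function.Injective, not_forall] at hr
    obtain ⟨a, b, hab, hne⟩ := hr
    rw [Matrix.det_zero_of_row_eq hne (by ext j; simp [hab]), mul_zero]
  rw [expand]
  simp only [expand]
  rw [← Finset.sum_filter_of_ne (p := Function.Injective)
    (fun r _ h => by by_contra h'; exact h (zero r h'))]
  rw [← Finset.sum_fiberwise_of_maps_to (t := F.powersetCard (Fintype.card n))
    (g := fun r => Finset.univ.image r)]
  · refine Finset.sum_congr rfl fun S hS => ?_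
    rw [Finset.mem_powersetCard] at hS
    refine Finset.sum_subset ?_ ?_
    · intro r hr
      simp only [Finset.mem_filter, Fintype.mem_piFinset] at hr ⊢
      intro a; rw [← hr.2]; exact Finset.mem_image_of_mem _ (Finset.mem_univ a)
    · intro r hr hr'
      apply zero
      intro hinj
      apply hr'
      simp only [Finset.mem_filter, Fintype.mem_piFinset] at hr ⊢
      refine ⟨⟨fun a => hS.1 (hr a), hinj⟩, ?_⟩
      apply Finset.eq_of_subset_of_card_le
      · intro x hx; obtain ⟨a, _, rfl⟩ := Finset.mem_image.1 hx; exact hr a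
      · rw [Finset.card_image_of_injective _ hinj, hS.2, Finset.card_univ]
  · intro r hr
    simp only [Finset.mem_filter, Fintype.mem_piFinset] at hr
    rw [Finset.mem_powersetCard, Finset.card_image_of_injective _ hr.2, Finset.card_univ]
    refine ⟨?_, rfl⟩
    intro x hx; obtain ⟨a, _, rfl⟩ := Finset.mem_image.1 hx; exact hr.1 a

/-! ### Singular incidence matrices -/

/-- The square matrix whose rows are the incidence vectors of the edges of a graph with as
many edges as vertices; `φ` labels the edges by the vertices. -/
noncomputable def incMat {V : Type*} [DecidableEq V] {Ψ : SimpleGraph V} (s : Sym2 V → ℤ)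
    (φ : V ≃ Ψ.edgeSet) : Matrix V V ℤ :=
  Matrix.of fun k => edgeVec s (φ k)

/-- Telescoping along a walk from `u` to `v`: the vector `1_u - sign(p) 1_v` is an integer
combination of the incidence vectors of the edges of the walk. -/
lemma exists_walk_combination {V : Type*} [Fintype V] [DecidableEq V] {Ψ : SimpleGraph V}
    {s : Sym2 V → ℤ} (hs : ∀ e, s e = 1 ∨ s e = -1) (φ : V ≃ Ψ.edgeSet) {u v : V}
    (p : Ψ.Walk u v) :
    ∃ y : Sym2 V → ℤ, (∀ e ∉ p.edges, y e = 0) ∧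
      ∑ k, y (φ k) • edgeVec s (φ k) =
        Pi.single u 1 - (p.edges.map s).prod • Pi.single v 1 := by
  induction p with
  | nil => exact ⟨0, by simp, by simp⟩
  | @cons a b c h p ih =>
    obtain ⟨y, hy, hsum⟩ := ih
    obtain ⟨ε, hε, hvec⟩ := edgeVec_mk hs a b
    refine ⟨fun e => s s(a, b) * y e + if e = s(a, b) then ε else 0, ?_, ?_⟩
    · intro e he
      simp only [SimpleGraph.Walk.edges_cons, List.mem_cons, not_or] at he
      simp [hy e he.2, he.1]
    · have h1 : ∑ k, (if (φ k : Sym2 V) = s(a, b) then ε else 0) • edgeVec s (φ k) =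
          ε • edgeVec s s(a, b) := by
        rw [Finset.sum_eq_single (φ.symm ⟨s(a, b), h⟩)]
        · simp
        · intro k _ hk
          rw [if_neg, zero_smul]
          intro h'
          exact hk (by rw [Equiv.eq_symm_apply]; exact Subtype.ext h')
        · simp
      simp only [add_smul, Finset.sum_add_distrib, mul_smul, ← Finset.smul_sum, hsum, h1, hvec]
      rw [← mul_smul ε ε, hε]
      simp only [SimpleGraph.Walk.edges_cons, List.map_cons, List.prod_cons, mul_smul, smul_sub,
        one_smul]
      abel

lemma walk_sign_eq {V : Type*} {Ψ : SimpleGraph V}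
    {s : Sym2 V → ℤ} (hs : ∀ e, s e = 1 ∨ s e = -1) {u v : V} (p : Ψ.Walk u v) :
    (p.edges.map s).prod = 1 ∨ (p.edges.map s).prod = -1 := by
  induction p with
  | nil => simp
  | @cons a b c h p ih =>
    simp only [SimpleGraph.Walk.edges_cons, List.map_cons, List.prod_cons]
    rcases ih with h1 | h1 <;> rcases hs s(a, b) with h2 | h2 <;> simp [h1, h2]

/-- The incidence vectors of the edges of a positive cycle are linearly dependent. -/
lemma det_incMat_of_pos_cycle {V : Type*} [Fintype V] [DecidableEq V] {Ψ : SimpleGraph V}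
    {s : Sym2 V → ℤ} (hs : ∀ e, s e = 1 ∨ s e = -1) (φ : V ≃ Ψ.edgeSet) {u : V}
    (c : Ψ.Walk u u) (hc : c.IsCycle) (hpos : (c.edges.map s).prod = 1) :
    (incMat s φ).det = 0 := by
  cases c with
  | nil => exact absurd hc (by simp)
  | @cons _ b _ h p =>
    rw [SimpleGraph.Walk.cons_isCycle_iff] at hc
    obtain ⟨y, hy, hsum⟩ := exists_walk_combination hs φ p
    obtain ⟨ε, hε, hvec⟩ := edgeVec_mk hs u b
    have hε0 : ε ≠ 0 := by rintro rfl; simp at hε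
    set k₀ := φ.symm ⟨s(u, b), h⟩ with hk₀
    have hk : (φ k₀ : Sym2 V) = s(u, b) := by simp [hk₀]
    rw [← Matrix.exists_vecMul_eq_zero_iff]
    refine ⟨fun k => s s(u, b) * y (φ k) + Pi.single (M := fun _ => ℤ) k₀ ε k, ?_, ?_⟩
    · intro h0
      have := congrFun h0 k₀
      simp only [hk, hy _ hc.2, Pi.single_eq_same, Pi.zero_apply, mul_zero, zero_add] at this
      exact hε0 this
    · rw [Matrix.vecMul_eq_sum]
      have h1 : ∑ k, (Pi.single (M := fun _ => ℤ) k₀ ε k) • incMat s φ k =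
          ε • edgeVec s s(u, b) := by
        rw [Finset.sum_eq_single k₀]
        · rw [Pi.single_eq_same, ← hk]; rfl
        · intro k _ hk; simp [hk]
        · simp
      have h2 : ∑ k, y (φ k) • incMat s φ k =
          Pi.single b 1 - (p.edges.map s).prod • Pi.single u 1 := hsum
      simp only [add_smul, Finset.sum_add_distrib, mul_smul, ← Finset.smul_sum, h1, h2, hvec]
      simp only [SimpleGraph.Walk.edges_cons, List.map_cons, List.prod_cons] at hpos
      rw [← mul_smul ε ε, hε, smul_sub, ← mul_smul (s s(u, b)), hpos]
      simp only [one_smul]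
      abel

/-- The `k` columns belonging to a tree component on `k` vertices are supported on `k - 1`
rows, hence linearly dependent. -/
lemma det_incMat_of_acyclic_component {V : Type*} [Fintype V] [DecidableEq V]
    {Ψ : SimpleGraph V} {s : Sym2 V → ℤ} (hs : ∀ e, s e = 1 ∨ s e = -1) (φ : V ≃ Ψ.edgeSet)
    (ψ : Ψ.ConnectedComponent)
    (hψ : ¬ ∃ (u : V) (c : Ψ.Walk u u), Ψ.connectedComponentMk u = ψ ∧ c.IsCycle) :
    (incMat s φ).det = 0 := by
  have htree : ψ.toSimpleGraph.IsTree := by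
    refine ⟨ψ.connected_toSimpleGraph, fun u c hc => hψ ⟨u, c.map ψ.toSimpleGraph_hom, u.2, ?_⟩⟩
    exact hc.map (f := ψ.toSimpleGraph_hom) Subtype.val_injective
  have hcard := htree.card_edgeFinset
  let f : (ψ → ℤ) →ₗ[ℤ] (ψ.toSimpleGraph.edgeSet → ℤ) :=
    (Matrix.of fun (t : ψ.toSimpleGraph.edgeSet) (v : ψ) =>
      edgeVec s (Sym2.map Subtype.val (t : Sym2 ψ)) v).mulVecLin
  have hf : ¬ Function.Injective f := by
    intro h
    have := card_le_of_injective ℤ f h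
    rw [← SimpleGraph.edgeFinset_card] at this
    lia
  rw [← LinearMap.ker_eq_bot, Submodule.eq_bot_iff] at hf
  push Not at hf
  obtain ⟨x, hx, hx0⟩ := hf
  rw [LinearMap.mem_ker] at hx
  rw [← Matrix.exists_mulVec_eq_zero_iff]
  refine ⟨fun v => if h : v ∈ ψ.supp then x ⟨v, h⟩ else 0, ?_, ?_⟩
  · intro h0
    apply hx0
    ext ⟨v, hv⟩
    have := congrFun h0 v
    simpa [show v ∈ ψ.supp from hv] using this
  · ext k
    have hsum : (Matrix.mulVec (incMat s φ)
        (fun v => if h : v ∈ ψ.supp then x ⟨v, h⟩ else 0)) k =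
        ∑ v : ψ, edgeVec s (φ k) v * x v := by
      rw [Matrix.mulVec, dotProduct]
      rw [← Finset.sum_filter_of_ne (p := (· ∈ ψ)), Finset.sum_subtype _ (p := (· ∈ ψ)) (by simp)]
      · refine Finset.sum_congr rfl fun v _ => ?_
        rw [dif_pos (show (v : V) ∈ ψ.supp from v.2)]
        rfl
      · intro v _ hv
        by_contra hv'
        rw [dif_neg (show v ∉ ψ.supp from hv'), mul_zero] at hv
        exact hv rfl
    rw [hsum, Pi.zero_apply]
    obtain ⟨e, he⟩ := φ k
    induction e using Sym2.ind with
    | _ a b =>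
      have hab : Ψ.Adj a b := he
      by_cases ha : a ∈ ψ.supp
      · have hb : b ∈ ψ.supp := by
          rw [SimpleGraph.ConnectedComponent.mem_supp_iff] at ha ⊢
          rw [← ha, SimpleGraph.ConnectedComponent.eq]
          exact hab.symm.reachable
        have := congrFun hx ⟨s((⟨a, ha⟩ : ψ), (⟨b, hb⟩ : ψ)), hab⟩
        exact this
      · have hb : b ∉ ψ.supp := by
          intro hb
          apply ha
          rw [SimpleGraph.ConnectedComponent.mem_supp_iff] at hb ⊢
          rw [← hb, SimpleGraph.ConnectedComponent.eq]
          exact hab.reachable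
        obtain ⟨ε, -, hvec⟩ := edgeVec_mk hs a b
        refine Finset.sum_eq_zero fun v _ => ?_
        have h1 : (v : V) ≠ a := by rintro rfl; exact ha v.2
        have h2 : (v : V) ≠ b := by rintro rfl; exact hb v.2
        simp [hvec, h1, h2]

/-! ### The incidence lattice when every component has a negative cycle -/

/-- The homomorphism sending `x : V → ℤ` to the parities of its sums over the connected
components. -/
noncomputable def parityMap {V : Type*} [Fintype V] (Ψ : SimpleGraph V) :
    (V → ℤ) →ₗ[ℤ] (Ψ.ConnectedComponent → ZMod 2) :=
  LinearMap.pi fun ψ =>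
    ∑ v, if Ψ.connectedComponentMk v = ψ then
      (Int.castAddHom (ZMod 2)).toIntLinearMap ∘ₗ LinearMap.proj v else 0

lemma parityMap_apply {V : Type*} [Fintype V] (Ψ : SimpleGraph V) (x : V → ℤ)
    (ψ : Ψ.ConnectedComponent) :
    parityMap Ψ x ψ = ((∑ v, if Ψ.connectedComponentMk v = ψ then x v else 0 : ℤ) : ZMod 2) := by
  simp only [parityMap, LinearMap.pi_apply, LinearMap.sum_apply, Int.cast_sum]
  refine Finset.sum_congr rfl fun v _ => ?_
  split_ifs <;> simp

lemma parityMap_single {V : Type*} [Fintype V] [DecidableEq V] (Ψ : SimpleGraph V) (u : V)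
    (ψ : Ψ.ConnectedComponent) :
    parityMap Ψ (Pi.single u 1) ψ = if Ψ.connectedComponentMk u = ψ then 1 else 0 := by
  rw [parityMap_apply, Finset.sum_eq_single u]
  · split_ifs <;> simp
  · intro v _ hv; simp [hv]
  · simp

lemma parityMap_surjective {V : Type*} [Fintype V] (Ψ : SimpleGraph V) :
    Function.Surjective (parityMap Ψ) := by
  intro g
  have hout : ∀ ψ : Ψ.ConnectedComponent, Ψ.connectedComponentMk (Quot.out ψ) = ψ :=
    fun ψ => Quot.out_eq ψ
  refine ⟨fun v => if v = Quot.out (Ψ.connectedComponentMk v) then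
    ((g (Ψ.connectedComponentMk v)).val : ℤ) else 0, ?_⟩
  ext ψ
  rw [parityMap_apply, Finset.sum_eq_single (Quot.out ψ)]
  · simp [hout]
  · intro v _ hv
    split_ifs with h1 h2
    · exact absurd (h1 ▸ h2) hv
    · rfl
    · rfl
  · simp

/-- If every component contains a negative cycle, the lattice spanned by the incidence
vectors consists of the integer vectors whose sum over each component is even. -/
lemma span_incMat_eq_ker {V : Type*} [Fintype V] [DecidableEq V] {Ψ : SimpleGraph V}
    {s : Sym2 V → ℤ} (hs : ∀ e, s e = 1 ∨ s e = -1) (φ : V ≃ Ψ.edgeSet)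
    (hneg : ∀ ψ : Ψ.ConnectedComponent, ∃ (u : V) (c : Ψ.Walk u u),
      Ψ.connectedComponentMk u = ψ ∧ (c.edges.map s).prod = -1) :
    Submodule.span ℤ (Set.range (incMat s φ)) = LinearMap.ker (parityMap Ψ) ∧
      ∀ v, (2 : ℤ) • (Pi.single v 1 : V → ℤ) ∈ Submodule.span ℤ (Set.range (incMat s φ)) := by
  set N := Submodule.span ℤ (Set.range (incMat s φ)) with hN
  have hwalk : ∀ {u v : V} (p : Ψ.Walk u v),
      (Pi.single u 1 - (p.edges.map s).prod • Pi.single v 1 : V → ℤ) ∈ N := by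
    intro u v p
    obtain ⟨y, -, hy⟩ := exists_walk_combination hs φ p
    rw [← hy]
    exact N.sum_mem fun k _ => N.smul_mem _ (Submodule.subset_span ⟨k, rfl⟩)
  have htwo : ∀ v, (2 : ℤ) • (Pi.single v 1 : V → ℤ) ∈ N := by
    intro v
    obtain ⟨u, c, hu, hc⟩ := hneg (Ψ.connectedComponentMk v)
    have h1 := hwalk c
    rw [hc] at h1
    obtain ⟨p⟩ := SimpleGraph.ConnectedComponent.exact hu.symm
    have h2 := hwalk p
    have := N.add_mem (N.smul_mem 2 h2) (N.smul_mem (p.edges.map s).prod h1)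
    convert this using 1
    module
  have hdiff : ∀ u v, Ψ.connectedComponentMk u = Ψ.connectedComponentMk v →
      (Pi.single u 1 - Pi.single v 1 : V → ℤ) ∈ N := by
    intro u v huv
    obtain ⟨p⟩ := SimpleGraph.ConnectedComponent.exact huv
    have h1 := hwalk p
    rcases walk_sign_eq hs p with h | h
    · simpa [h] using h1
    · rw [h] at h1
      convert N.sub_mem h1 (htwo v) using 1
      module
  refine ⟨le_antisymm ?_ ?_, htwo⟩
  · rw [hN, Submodule.span_le]
    rintro _ ⟨k, rfl⟩
    rw [SetLike.mem_coe, LinearMap.mem_ker]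
    change parityMap Ψ (edgeVec s (φ k)) = 0
    obtain ⟨e, he⟩ := φ k
    induction e using Sym2.ind with
    | _ a b =>
      have hab : Ψ.Adj a b := he
      obtain ⟨ε, -, hvec⟩ := edgeVec_mk hs a b
      have hcomp : Ψ.connectedComponentMk a = Ψ.connectedComponentMk b :=
        SimpleGraph.ConnectedComponent.sound hab.reachable
      ext ψ
      simp only [hvec, map_smul, map_sub, Pi.smul_apply, Pi.sub_apply, parityMap_single, hcomp,
        Pi.zero_apply]
      rcases hs s(a, b) with h | h <;> rw [h] <;> split_ifs <;> simp
  · intro x hx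
    rw [LinearMap.mem_ker] at hx
    have hout : ∀ ψ : Ψ.ConnectedComponent, Ψ.connectedComponentMk (Quot.out ψ) = ψ :=
      fun ψ => Quot.out_eq ψ
    -- move all the mass of each component to its chosen representative
    have hdecomp : x = ∑ v, x v • (Pi.single v 1 -
          Pi.single (Quot.out (Ψ.connectedComponentMk v)) 1 : V → ℤ) +
        ∑ ψ : Ψ.ConnectedComponent,
          (∑ v, if Ψ.connectedComponentMk v = ψ then x v else 0) •
            (Pi.single (Quot.out ψ) 1 : V → ℤ) := by
      have h1 : ∑ ψ : Ψ.ConnectedComponent,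
          (∑ v, if Ψ.connectedComponentMk v = ψ then x v else 0) •
            (Pi.single (Quot.out ψ) 1 : V → ℤ) =
          ∑ v, x v • (Pi.single (Quot.out (Ψ.connectedComponentMk v)) 1 : V → ℤ) := by
        simp only [Finset.sum_smul]
        rw [Finset.sum_comm]
        refine Finset.sum_congr rfl fun v _ => ?_
        simp [ite_smul]
      rw [h1]
      simp only [smul_sub, Finset.sum_sub_distrib, sub_add_cancel]
      ext j
      simp [Finset.sum_apply, Pi.single_apply]
    rw [hdecomp]
    refine N.add_mem (N.sum_mem fun v _ => N.smul_mem _ (hdiff _ _ (hout _).symm))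
      (N.sum_mem fun ψ _ => ?_)
    have h0 := congrFun hx ψ
    rw [parityMap_apply, Pi.zero_apply, ZMod.intCast_zmod_eq_zero_iff_dvd] at h0
    obtain ⟨m, hm⟩ := h0
    rw [hm]
    push_cast
    rw [mul_comm, mul_smul]
    exact N.smul_mem _ (htwo _)

lemma natAbs_det_incMat {V : Type*} [Fintype V] [DecidableEq V] {Ψ : SimpleGraph V}
    {s : Sym2 V → ℤ} (hs : ∀ e, s e = 1 ∨ s e = -1) (φ : V ≃ Ψ.edgeSet)
    (hneg : ∀ ψ : Ψ.ConnectedComponent, ∃ (u : V) (c : Ψ.Walk u u),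
      Ψ.connectedComponentMk u = ψ ∧ (c.edges.map s).prod = -1) :
    (incMat s φ).det.natAbs = 2 ^ Nat.card Ψ.ConnectedComponent := by
  obtain ⟨hker, htwo⟩ := span_incMat_eq_ker hs φ hneg
  -- `2ℤ^V` lies in the row lattice, so `Q * M = 2` for some integer matrix `Q`
  have hdet : (incMat s φ).det ≠ 0 := by
    choose Q hQ using fun v => (Submodule.mem_span_range_iff_exists_fun ℤ).1 (htwo v)
    have hmul : Matrix.of Q * incMat s φ = (2 : ℤ) • (1 : Matrix V V ℤ) := by
      ext i j
      have := congrFun (hQ i) j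
      simp only [Finset.sum_apply, Pi.smul_apply, smul_eq_mul] at this
      rw [Matrix.mul_apply]
      simp only [Matrix.of_apply, this, Matrix.smul_apply, smul_eq_mul, Matrix.one_apply,
        Pi.single_apply, eq_comm]
    intro h0
    have := congrArg Matrix.det hmul
    rw [Matrix.det_mul, h0, Matrix.det_smul, Matrix.det_one] at this
    rw [mul_zero, mul_one] at this
    exact pow_ne_zero _ two_ne_zero this.symm
  have hli := Matrix.linearIndependent_rows_of_det_ne_zero hdet
  have h := Submodule.natAbs_det_basis_change (Pi.basisFun ℤ V) _ (Module.Basis.span hli)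
  have h1 : (Subtype.val ∘ ⇑(Module.Basis.span hli)) = incMat s φ := by
    ext k : 1
    exact congrArg Subtype.val (Module.Basis.span_apply hli k)
  rw [h1, Pi.basisFun_det] at h
  refine h.trans ?_
  change Nat.card ((V → ℤ) ⧸ Submodule.span ℤ (Set.range (incMat s φ))) = _
  rw [hker, Nat.card_congr
    (LinearMap.quotKerEquivOfSurjective _ (parityMap_surjective Ψ)).toEquiv]
  rw [Nat.card_fun, Nat.card_zmod]

/-! ### Assembling the formula -/

/-- The incidence determinant detects contrabalanced `1`-forests among the graphs with as
many edges as vertices. -/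
lemma det_incMat_sq {V : Type*} [Fintype V] [DecidableEq V] {Ψ : SimpleGraph V}
    {s : Sym2 V → ℤ} (hs : ∀ e, s e = 1 ∨ s e = -1) (φ : V ≃ Ψ.edgeSet) :
    (incMat s φ).det ^ 2 =
      if (∀ ψ : Ψ.ConnectedComponent,
            ∃ (u : V) (c : Ψ.Walk u u), Ψ.connectedComponentMk u = ψ ∧ c.IsCycle) ∧
          (∀ (u : V) (c : Ψ.Walk u u), c.IsCycle → (c.edges.map s).prod = -1)
      then 4 ^ Nat.card Ψ.ConnectedComponent else 0 := by
  split_ifs with h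
  · have := natAbs_det_incMat hs φ fun ψ => by
      obtain ⟨u, c, hu, hc⟩ := h.1 ψ
      exact ⟨u, c, hu, h.2 u c hc⟩
    rw [← Int.natAbs_sq, this]
    push_cast
    rw [← pow_mul, mul_comm, pow_mul]
    norm_num
  · rw [sq_eq_zero_iff]
    rw [not_and_or] at h
    rcases h with h | h
    · obtain ⟨ψ, hψ⟩ := not_forall.1 h
      exact det_incMat_of_acyclic_component hs φ ψ hψ
    · push Not at h
      obtain ⟨u, c, hc, hne⟩ := h
      exact det_incMat_of_pos_cycle hs φ c hc ((walk_sign_eq hs c).resolve_right hne)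

lemma det_edge_subset {V : Type*} [Fintype V] [DecidableEq V] {Ψ : SimpleGraph V}
    [Fintype Ψ.edgeSet] (w : Sym2 V → ℝ) (s : Sym2 V → ℤ) (φ : V ≃ Ψ.edgeSet) :
    (Matrix.of fun i j => ∑ e ∈ Ψ.edgeFinset,
      (w e * (edgeVec s e i : ℝ)) * (edgeVec s e j : ℝ)).det =
      ((incMat s φ).det : ℝ) ^ 2 * ∏ e ∈ Ψ.edgeFinset, w e := by
  have hmat : (Matrix.of fun i j => ∑ e ∈ Ψ.edgeFinset,
      (w e * (edgeVec s e i : ℝ)) * (edgeVec s e j : ℝ)) =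
      ((incMat s φ).map (Int.cast : ℤ → ℝ)).transpose * Matrix.diagonal (fun k => w (φ k)) *
        (incMat s φ).map (Int.cast : ℤ → ℝ) := by
    ext i j
    rw [Matrix.mul_apply, Matrix.of_apply,
      Finset.sum_subtype _ (p := (· ∈ Ψ.edgeSet)) (fun _ => SimpleGraph.mem_edgeFinset)]
    rw [← Equiv.sum_comp φ]
    refine Finset.sum_congr rfl fun k _ => ?_
    rw [Matrix.mul_diagonal]
    simp only [incMat, Matrix.transpose_apply, Matrix.map_apply, Matrix.of_apply]
    ring
  have hprod : ∏ e ∈ Ψ.edgeFinset, w e = ∏ k, w (φ k) := by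
    rw [Finset.prod_subtype _ (p := (· ∈ Ψ.edgeSet)) (fun _ => SimpleGraph.mem_edgeFinset)]
    exact (Equiv.prod_comp φ (fun e => w e)).symm
  have hcast : ((incMat s φ).map (Int.cast : ℤ → ℝ)).det = ((incMat s φ).det : ℝ) :=
    ((Int.castRingHom ℝ).map_det (incMat s φ)).symm
  rw [hmat, hprod, Matrix.det_mul, Matrix.det_mul, Matrix.det_transpose, Matrix.det_diagonal,
    hcast]
  ring

/-- For any weighted signed graph `(Σ,w)`,
`det L(Σ,w) = ∑_Ψ 4^{c(Ψ)} ⬝ w(Ψ)`, where the summation runs over all contrabalanced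
spanning `1`-forests `Ψ` of `G` (spanning subgraphs with as many edges as vertices, in
which every component contains a cycle — hence is unicyclic — and every cycle is
negative), `c(Ψ)` is the number of connected components of `Ψ`, and `w(Ψ)` is the
product of the weights of the edges of `Ψ`. -/
theorem det_signedLap_eq_sum_contrabalanced_one_forests
    {V : Type*} [Fintype V] [DecidableEq V] (G : SimpleGraph V) [DecidableRel G.Adj]
    (σ w : Sym2 V → ℝ)
    (hσ : ∀ e ∈ G.edgeSet, σ e = 1 ∨ σ e = -1)
    (hw : ∀ e ∈ G.edgeSet, 0 < w e) :
    (signedLap G σ w).det =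
      ∑ Ψ ∈ Finset.univ.filter (fun Ψ : SimpleGraph V =>
          Ψ ≤ G ∧ Ψ.edgeFinset.card = Fintype.card V ∧
          (∀ ψ : Ψ.ConnectedComponent,
            ∃ (u : V) (c : Ψ.Walk u u), Ψ.connectedComponentMk u = ψ ∧ c.IsCycle) ∧
          (∀ (u : V) (c : Ψ.Walk u u), c.IsCycle → (c.edges.map σ).prod = -1)),
        (4 : ℝ) ^ Nat.card Ψ.ConnectedComponent * ∏ e ∈ Ψ.edgeFinset, w e := by
  obtain ⟨s, hs, hsσ⟩ : ∃ s : Sym2 V → ℤ, (∀ e, s e = 1 ∨ s e = -1) ∧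
      ∀ e ∈ G.edgeSet, σ e = s e := by
    refine ⟨fun e => if σ e = 1 then 1 else -1, fun e => ?_, fun e he => ?_⟩
    · dsimp only; split_ifs <;> simp
    · rcases hσ e he with h | h
      · simp [h]
      · norm_num [h]
  -- integer and real signs of walks agree in every subgraph of `G`
  have hsign : ∀ Ψ : SimpleGraph V, Ψ ≤ G → ∀ (u : V) (c : Ψ.Walk u u),
      (c.edges.map σ).prod = -1 ↔ (c.edges.map s).prod = -1 := by
    intro Ψ hΨ u c
    have h1 : c.edges.map σ = (c.edges.map s).map (Int.cast : ℤ → ℝ) := by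
      rw [List.map_map]
      refine List.map_congr_left fun e he => ?_
      exact hsσ e (SimpleGraph.edgeSet_subset_edgeSet.2 hΨ (c.edges_subset_edgeSet he))
    have h2 : ((c.edges.map s).map (Int.cast : ℤ → ℝ)).prod = ((c.edges.map s).prod : ℝ) :=
      ((Int.castRingHom ℝ).map_list_prod _).symm
    rw [h1, h2]
    exact_mod_cast Iff.rfl
  have hlap : signedLap G σ w = Matrix.of fun i j =>
      ∑ e ∈ G.edgeFinset, (w e * (edgeVec s e i : ℝ)) * (edgeVec s e j : ℝ) := by
    ext i j
    exact signedLap_apply G hs hsσ i j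
  have hterm : ∀ Ψ : SimpleGraph V, Ψ ≤ G → Ψ.edgeFinset.card = Fintype.card V →
      (Matrix.of fun i j => ∑ e ∈ Ψ.edgeFinset,
        (w e * (edgeVec s e i : ℝ)) * (edgeVec s e j : ℝ)).det =
      if (∀ ψ : Ψ.ConnectedComponent,
            ∃ (u : V) (c : Ψ.Walk u u), Ψ.connectedComponentMk u = ψ ∧ c.IsCycle) ∧
          (∀ (u : V) (c : Ψ.Walk u u), c.IsCycle → (c.edges.map σ).prod = -1)
      then (4 : ℝ) ^ Nat.card Ψ.ConnectedComponent * ∏ e ∈ Ψ.edgeFinset, w e else 0 := by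
    intro Ψ hΨ hcard
    rw [SimpleGraph.edgeFinset_card] at hcard
    have φ : V ≃ Ψ.edgeSet := Fintype.equivOfCardEq hcard.symm
    rw [det_edge_subset w s φ, ← Int.cast_pow, det_incMat_sq hs φ]
    simp only [hsign Ψ hΨ]
    split_ifs <;> simp
  rw [hlap, det_sum_rankOne G.edgeFinset (fun i e => w e * (edgeVec s e i : ℝ))
    (fun e j => (edgeVec s e j : ℝ))]
  -- the subsets `S` of the expansion are the edge sets of the subgraphs with `|V|` edges
  symm
  refine Finset.sum_bij_ne_zero (fun Ψ _ _ => Ψ.edgeFinset) ?_ ?_ ?_ ?_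
  · intro Ψ hΨ _
    rw [Finset.mem_filter] at hΨ
    rw [Finset.mem_powersetCard]
    exact ⟨SimpleGraph.edgeFinset_subset_edgeFinset.2 hΨ.2.1, hΨ.2.2.1⟩
  · intro Ψ₁ _ _ Ψ₂ _ _ h
    exact SimpleGraph.edgeFinset_inj.1 h
  · intro S hS hne
    rw [Finset.mem_powersetCard] at hS
    obtain ⟨Ψ, hΨ⟩ : ∃ Ψ : SimpleGraph V, Ψ.edgeSet = S := by
      refine ⟨SimpleGraph.fromEdgeSet (S : Set (Sym2 V)), ?_⟩
      ext e
      rw [SimpleGraph.edgeSet_fromEdgeSet]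
      refine ⟨fun h => h.1, fun h => ⟨h, ?_⟩⟩
      exact G.not_isDiag_of_mem_edgeSet (SimpleGraph.mem_edgeFinset.1 (hS.1 h))
    have hE : Ψ.edgeFinset = S := by
      ext e
      rw [SimpleGraph.mem_edgeFinset, hΨ, Finset.mem_coe]
    have hle : Ψ ≤ G := by
      rw [← SimpleGraph.edgeFinset_subset_edgeFinset, hE]
      exact hS.1
    have hcard : Ψ.edgeFinset.card = Fintype.card V := by rw [hE, hS.2]
    rw [← hE, hterm Ψ hle hcard] at hne
    have hgood := ite_ne_right_iff.1 hne
    refine ⟨Ψ, ?_, ?_, hE⟩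
    · rw [Finset.mem_filter]
      exact ⟨Finset.mem_univ _, hle, hcard, hgood.1⟩
    · exact hgood.2
  · intro Ψ hΨ _
    rw [Finset.mem_filter] at hΨ
    rw [hterm Ψ hΨ.2.1 hΨ.2.2.1, if_pos hΨ.2.2.2]
end

section
/- A connected weighted signed graph (Σ,w) is balanced (every cycle has positive sign product) if and only if det L(Σ,w) = 0. -/
/-- The sign of a walk: the product of the signs of its edges, counted with multiplicity. -/
def walkSign {V : Type*} {G : SimpleGraph V} (σ : Sym2 V → ℝ) {u v : V} (p : G.Walk u v) : ℝ :=
  (p.edges.map σ).prod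

section WalkSign

variable {V : Type*} {G : SimpleGraph V} {σ : Sym2 V → ℝ}

lemma walkSign_nil (u : V) : walkSign σ (SimpleGraph.Walk.nil : G.Walk u u) = 1 := by
  simp [walkSign]

lemma walkSign_cons {u v x : V} (h : G.Adj u v) (p : G.Walk v x) :
    walkSign σ (SimpleGraph.Walk.cons h p) = σ s(u, v) * walkSign σ p := by
  simp [walkSign]

lemma walkSign_append {u v x : V} (p : G.Walk u v) (q : G.Walk v x) :
    walkSign σ (p.append q) = walkSign σ p * walkSign σ q := by
  simp [walkSign]

lemma walkSign_reverse {u v : V} (p : G.Walk u v) :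
    walkSign σ p.reverse = walkSign σ p := by
  simp [walkSign, List.prod_reverse]

lemma edgeSign_mul_self (hσ : ∀ e ∈ G.edgeSet, σ e = 1 ∨ σ e = -1) {u v : V} (h : G.Adj u v) :
    σ s(u, v) * σ s(u, v) = 1 := by
  rcases hσ s(u, v) h with h | h <;> simp [h]

/-- A path closed up by an edge is either a cycle or that edge traversed back and forth; both have
sign `1` in a balanced graph. -/
lemma sign_mul_walkSign_path (hσ : ∀ e ∈ G.edgeSet, σ e = 1 ∨ σ e = -1)
    (hb : ∀ (u : V) (c : G.Walk u u), c.IsCycle → (c.edges.map σ).prod = 1)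
    {u v : V} (h : G.Adj u v) (q : G.Walk v u) (hq : q.IsPath) :
    σ s(u, v) * walkSign σ q = 1 := by
  by_cases he : s(u, v) ∈ q.edges
  · cases q with
    | nil => exact absurd rfl h.ne
    | @cons _ y _ h' q' =>
      rw [SimpleGraph.Walk.cons_isPath_iff] at hq
      rw [SimpleGraph.Walk.edges_cons, List.mem_cons] at he
      rcases he with he | he
      · have hy : u = y := by
          rw [Sym2.eq_swap] at he
          exact Sym2.congr_right.mp he
        subst hy
        have hnil : q' = SimpleGraph.Walk.nil :=
          SimpleGraph.Walk.eq_nil_iff_nil.mpr (SimpleGraph.Walk.isPath_iff_nil.mp hq.1)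
        subst hnil
        rw [walkSign_cons, walkSign_nil, mul_one, Sym2.eq_swap (a := v)]
        exact edgeSign_mul_self hσ h
      · exact absurd (q'.snd_mem_support_of_mem_edges he) hq.2
  · rw [← walkSign_cons h q]
    exact hb u _ ((SimpleGraph.Walk.cons_isCycle_iff q h).mpr ⟨hq, he⟩)

lemma walkSign_bypass [DecidableEq V] (hσ : ∀ e ∈ G.edgeSet, σ e = 1 ∨ σ e = -1)
    (hb : ∀ (u : V) (c : G.Walk u u), c.IsCycle → (c.edges.map σ).prod = 1)
    {u v : V} (p : G.Walk u v) : walkSign σ p.bypass = walkSign σ p := by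
  induction p with
  | nil => rfl
  | @cons a b c h p ih =>
    rw [SimpleGraph.Walk.bypass, walkSign_cons, ← ih]
    split_ifs with hs
    · -- The discarded part is `h` followed by a path back to `a`, so it has sign `1`.
      have hsplit := walkSign_append (σ := σ) (p.bypass.takeUntil a hs) (p.bypass.dropUntil a hs)
      rw [SimpleGraph.Walk.take_spec] at hsplit
      rw [hsplit, ← mul_assoc,
        sign_mul_walkSign_path hσ hb h _ (p.bypass_isPath.takeUntil hs), one_mul]
    · rw [walkSign_cons]

lemma walkSign_closed [DecidableEq V] (hσ : ∀ e ∈ G.edgeSet, σ e = 1 ∨ σ e = -1)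
    (hb : ∀ (u : V) (c : G.Walk u u), c.IsCycle → (c.edges.map σ).prod = 1)
    {u : V} (p : G.Walk u u) : walkSign σ p = 1 := by
  have hnil : p.bypass = SimpleGraph.Walk.nil :=
    SimpleGraph.Walk.eq_nil_iff_nil.mpr (SimpleGraph.Walk.isPath_iff_nil.mp p.bypass_isPath)
  rw [← walkSign_bypass hσ hb p, hnil, walkSign_nil]

lemma eq_walkSign_mul {x : V → ℝ} (hx : ∀ i j, G.Adj i j → x i = σ s(i, j) * x j)
    {u v : V} (p : G.Walk u v) : x u = walkSign σ p * x v := by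
  induction p with
  | nil => rw [walkSign_nil, one_mul]
  | cons h p ih => rw [walkSign_cons, hx _ _ h, ih, mul_assoc]

end WalkSign

section Kernel

variable {V : Type*} [Fintype V] [DecidableEq V] {G : SimpleGraph V} [DecidableRel G.Adj]
  {σ w : Sym2 V → ℝ}

lemma mulVec_signedLap_apply (x : V → ℝ) (i : V) :
    (signedLap G σ w).mulVec x i =
      ∑ j, if G.Adj i j then w s(i, j) * (x i - σ s(i, j) * x j) else 0 := by
  have hentry : ∀ j, signedLap G σ w i j * x j =
      (if i = j then (∑ k, if G.Adj i k then w s(i, k) else 0) * x i else 0) +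
        (if G.Adj i j then -(σ s(i, j) * w s(i, j)) * x j else 0) := by
    intro j
    by_cases hij : i = j
    · subst hij
      simp [signedLap]
    · simp [signedLap, hij]
  simp only [Matrix.mulVec, dotProduct, hentry]
  rw [Finset.sum_add_distrib, Finset.sum_ite_eq, if_pos (Finset.mem_univ i), Finset.sum_mul,
    ← Finset.sum_add_distrib]
  refine Finset.sum_congr rfl fun j _ => ?_
  split_ifs <;> ring

/-- The identity `2 xᵀ L x = ∑ w ij * (x i - σ ij * x j)²`, over ordered adjacent pairs. -/
lemma two_mul_dotProduct_mulVec_signedLap (hσ : ∀ e ∈ G.edgeSet, σ e = 1 ∨ σ e = -1)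
    (x : V → ℝ) :
    2 * (x ⬝ᵥ (signedLap G σ w).mulVec x) =
      ∑ i, ∑ j, if G.Adj i j then w s(i, j) * (x i - σ s(i, j) * x j) ^ 2 else 0 := by
  have h₁ : x ⬝ᵥ (signedLap G σ w).mulVec x =
      ∑ i, ∑ j, if G.Adj i j then w s(i, j) * (x i ^ 2 - σ s(i, j) * x i * x j) else 0 := by
    simp only [dotProduct, mulVec_signedLap_apply, Finset.mul_sum]
    refine Finset.sum_congr rfl fun i _ => Finset.sum_congr rfl fun j _ => ?_
    split_ifs <;> ring
  have h₂ : x ⬝ᵥ (signedLap G σ w).mulVec x =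
      ∑ i, ∑ j, if G.Adj i j then w s(i, j) * (x j ^ 2 - σ s(i, j) * x i * x j) else 0 := by
    rw [h₁, Finset.sum_comm]
    refine Finset.sum_congr rfl fun i _ => Finset.sum_congr rfl fun j _ => ?_
    simp only [Sym2.eq_swap (a := j) (b := i), G.adj_comm j i]
    split_ifs <;> ring
  rw [two_mul]
  nth_rewrite 1 [h₁]
  rw [h₂, ← Finset.sum_add_distrib]
  refine Finset.sum_congr rfl fun i _ => ?_
  rw [← Finset.sum_add_distrib]
  refine Finset.sum_congr rfl fun j _ => ?_
  split_ifs with h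
  · linear_combination (-(w s(i, j) * x j ^ 2)) * edgeSign_mul_self hσ h
  · ring

lemma mulVec_signedLap_eq_zero_iff (hσ : ∀ e ∈ G.edgeSet, σ e = 1 ∨ σ e = -1)
    (hw : ∀ e ∈ G.edgeSet, 0 < w e) (x : V → ℝ) :
    (signedLap G σ w).mulVec x = 0 ↔ ∀ i j, G.Adj i j → x i = σ s(i, j) * x j := by
  constructor
  · intro hx i j hij
    have hnonneg : ∀ i j : V,
        0 ≤ if G.Adj i j then w s(i, j) * (x i - σ s(i, j) * x j) ^ 2 else 0 := by
      intro i j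
      split_ifs with h
      · exact mul_nonneg (hw s(i, j) h).le (sq_nonneg _)
      · exact le_rfl
    have hsum := two_mul_dotProduct_mulVec_signedLap (w := w) hσ x
    rw [hx, dotProduct_zero, mul_zero, eq_comm,
      Finset.sum_eq_zero_iff_of_nonneg fun i _ => Finset.sum_nonneg fun j _ => hnonneg i j] at hsum
    have hi := hsum i (Finset.mem_univ i)
    rw [Finset.sum_eq_zero_iff_of_nonneg fun j _ => hnonneg i j] at hi
    have hterm := hi j (Finset.mem_univ j)
    rw [if_pos hij] at hterm
    have hsq := (mul_eq_zero.mp hterm).resolve_left (hw s(i, j) hij).ne'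
    exact sub_eq_zero.mp (pow_eq_zero_iff two_ne_zero |>.mp hsq)
  · intro hx
    funext i
    rw [mulVec_signedLap_apply, Pi.zero_apply]
    refine Finset.sum_eq_zero fun j _ => ?_
    split_ifs with h
    · rw [hx i j h, sub_self, mul_zero]
    · rfl

end Kernel

/-- A connected weighted signed graph `(Σ,w)` is balanced (every cycle
has positive sign product) if and only if `det L(Σ,w) = 0`. -/
theorem balanced_iff_det_signedLap_eq_zero
    {V : Type*} [Fintype V] [DecidableEq V] (G : SimpleGraph V) [DecidableRel G.Adj]
    (σ w : Sym2 V → ℝ)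
    (hσ : ∀ e ∈ G.edgeSet, σ e = 1 ∨ σ e = -1)
    (hw : ∀ e ∈ G.edgeSet, 0 < w e)
    (hconn : G.Connected) :
    (∀ (u : V) (c : G.Walk u u), c.IsCycle → (c.edges.map σ).prod = 1) ↔
      (signedLap G σ w).det = 0 := by
  rw [← Matrix.exists_mulVec_eq_zero_iff]
  constructor
  · intro hb
    obtain ⟨r⟩ := hconn.nonempty
    let P : ∀ i, G.Walk r i := fun i => (hconn.preconnected r i).some
    have hsq : ∀ i, walkSign σ (P i) * walkSign σ (P i) = 1 := by
      intro i
      have h := walkSign_closed hσ hb ((P i).append (P i).reverse)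
      rwa [walkSign_append, walkSign_reverse] at h
    refine ⟨fun i => walkSign σ (P i), fun h0 => ?_, ?_⟩
    · have h := hsq r
      rw [show walkSign σ (P r) = 0 from congrFun h0 r] at h
      norm_num at h
    · rw [mulVec_signedLap_eq_zero_iff hσ hw]
      intro i j hij
      -- The closed walk `r → i → j → r` has sign `1`, and the factors square to `1`.
      have h := walkSign_closed hσ hb
        ((P i).append (SimpleGraph.Walk.cons hij (P j).reverse))
      rw [walkSign_append, walkSign_cons, walkSign_reverse] at h
      linear_combination (σ s(i, j) * walkSign σ (P j)) * h
        - walkSign σ (P i) * walkSign σ (P j) * walkSign σ (P j) * edgeSign_mul_self hσ hij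
        - walkSign σ (P i) * hsq j
  · rintro ⟨x, hx0, hx⟩ u c -
    rw [mulVec_signedLap_eq_zero_iff hσ hw] at hx
    obtain ⟨i, hi⟩ := Function.ne_iff.mp hx0
    have hu : x u ≠ 0 := by
      intro hu
      apply hi
      rw [eq_walkSign_mul hx (hconn.preconnected i u).some, hu, mul_zero, Pi.zero_apply]
    have hc : x u = walkSign σ c * x u := eq_walkSign_mul hx c
    exact mul_right_cancel₀ hu (by rw [one_mul]; exact hc.symm)
end
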